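/- Let λ ∈ [1/3, 1/2), let K ⊂ ℝ² be a nonempty compact set satisfying K = F₁(K) ∪ F₂(K) ∪ F₃(K) ∪ F₄(K) for the von Koch similarity maps with parameter λ, and let Ω be the bounded connected component of ℝ² ∖ (G₁(K) ∪ G₂(K) ∪ G₃(K)), the snowflake domain. Then Ω is a ((1/2 − λ)/λ)-John domain. -/

import Mathlib

open Metric Set MeasureTheory

noncomputable section

abbrev Plane := EuclideanSpace ℝ (Fin 2)

/-- An open axis-parallel cube in `ℝ^d` with side length `s`. -/
def IsCube {d : ℕ} (Q : Set (EuclideanSpace ℝ (Fin d))) (s : ℝ) : Prop :=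
  0 < s ∧ ∃ c : Fin d → ℝ, Q = {x | ∀ i, x i ∈ Set.Ioo (c i) (c i + s)}

/-- The curve condition with exponent `p` and constant `C`: any two points of the
complement of `Ω` can be joined by a unit-speed (1-Lipschitz) curve in the complement
along which the arclength integral of `dist(·, ∂Ω)^(1-p)` is at most `C‖z₁-z₂‖^(2-p)`. -/
def CurveCondition (Ω : Set Plane) (p C : ℝ) : Prop :=
  ∀ z₁ ∈ Ωᶜ, ∀ z₂ ∈ Ωᶜ, ∃ (L : ℝ) (γ : ℝ → Plane), 0 ≤ L ∧
    LipschitzOnWith 1 γ (Set.Icc 0 L) ∧ γ 0 = z₁ ∧ γ L = z₂ ∧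
    (∀ t ∈ Set.Icc (0:ℝ) L, γ t ∈ Ωᶜ) ∧
    (∫ t in (0:ℝ)..L, Metric.infDist (γ t) (frontier Ω) ^ (1 - p)) ≤ C * ‖z₁ - z₂‖ ^ (2 - p)

/-- `Ω` is a `J`-John domain: there is a center `x₀` such that every point can be joined
to `x₀` by a unit-speed (1-Lipschitz) curve `γ` in `Ω` with `dist(γ t, ∂Ω) ≥ J·t`. -/
def IsJohnDomain (Ω : Set Plane) (J : ℝ) : Prop :=
  ∃ x₀ ∈ Ω, ∀ x ∈ Ω, ∃ (ℓ : ℝ) (γ : ℝ → Plane), 0 ≤ ℓ ∧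
    LipschitzOnWith 1 γ (Set.Icc 0 ℓ) ∧ γ 0 = x ∧ γ ℓ = x₀ ∧
    (∀ t ∈ Set.Icc (0:ℝ) ℓ, γ t ∈ Ω ∧ J * t ≤ Metric.infDist (γ t) (frontier Ω))

/-- `Ω` is a Jordan domain: a bounded domain whose boundary is a homeomorphic
image of the circle. -/
def IsJordanDomain (Ω : Set Plane) : Prop :=
  IsOpen Ω ∧ IsConnected Ω ∧ Bornology.IsBounded Ω ∧
  ∃ f : (Metric.sphere (0 : Plane) 1) → Plane,
    Continuous f ∧ Function.Injective f ∧ Set.range f = frontier Ω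

/-- `E` is weakly mean porous with parameters `(α, lam)`: there is a pairwise disjoint
collection `D` of open cubes in the complement of `E` and a `j₀` such that for every
`x ∈ E` and `j ≥ j₀`, more than half of the scales `k ∈ {1,…,j}` admit at least `lam k`
cubes of `D` of side length at least `α(2^(-k))` inside the annulus
`B(x,2^(-k)) ∖ B(x,2^(-k-1))`. -/
def WeaklyMeanPorous {d : ℕ} (E : Set (EuclideanSpace ℝ (Fin d)))
    (α : ℝ → ℝ) (lam : ℕ → ℝ) : Prop :=
  ∃ (D : Set (Set (EuclideanSpace ℝ (Fin d)))) (j₀ : ℕ), 0 < j₀ ∧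
    (∀ Q ∈ D, (∃ s, IsCube Q s) ∧ Q ⊆ Eᶜ) ∧ D.Pairwise Disjoint ∧
    ∀ x ∈ E, ∀ j : ℕ, j₀ ≤ j →
      (j : ℝ) / 2 < ({k : ℕ | k ∈ Finset.Icc 1 j ∧
        ∃ S : Finset (Set (EuclideanSpace ℝ (Fin d))), lam k ≤ S.card ∧
          ∀ Q ∈ S, Q ∈ D ∧
            Q ⊆ Metric.ball x ((2:ℝ) ^ (-(k:ℝ))) \ Metric.ball x ((2:ℝ) ^ (-(k:ℝ) - 1)) ∧
            ∃ s, α ((2:ℝ) ^ (-(k:ℝ))) ≤ s ∧ IsCube Q s}).ncard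

/-- The point `(a,b)` of the Euclidean plane. -/
def pt (a b : ℝ) : Plane := (WithLp.equiv 2 (Fin 2 → ℝ)).symm ![a, b]

/-- Rotation of the plane by angle `τ` about the origin. -/
def rot (τ : ℝ) (x : Plane) : Plane :=
  pt (Real.cos τ * x 0 - Real.sin τ * x 1) (Real.sin τ * x 0 + Real.cos τ * x 1)

/-- The angle `θ ∈ (0,π)` with `cos θ = (1/2 - l)/l`. -/
def kochAngle (l : ℝ) : ℝ := Real.arccos ((1/2 - l) / l)

/-- The similarity maps `F₁, F₂, F₃, F₄` of the von Koch curve with parameter `l`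
(here `h = √(l - 1/4)`). -/
def kochF (l : ℝ) : Fin 4 → Plane → Plane :=
  ![fun x => l • x,
    fun x => rot (kochAngle l) (l • x) + pt l 0,
    fun x => rot (-kochAngle l) (l • x) + pt (1/2) (Real.sqrt (l - 1/4)),
    fun x => l • x + pt (1 - l) 0]

/-- The placement maps `G₁, G₂, G₃` for the snowflake domain. -/
def kochG : Fin 3 → Plane → Plane :=
  ![fun x => x,
    fun x => rot (-(2 * Real.pi / 3)) x + pt 1 0,
    fun x => rot (2 * Real.pi / 3) x + pt (1/2) (-(Real.sqrt 3 / 2))]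

/-- The union of the three placed copies of the Koch curve `K`, forming the
boundary of the snowflake. -/
def snowflakeBoundary (K : Set Plane) : Set Plane :=
  kochG 0 '' K ∪ kochG 1 '' K ∪ kochG 2 '' K

/-! The outer stages of the snowflake are closed sets without bounded holes, so they contain `Ω`,
whose frontier lies on the snowflake curve. As a point off the curve drops out of the part of some
stage that covers the curve, each point of `Ω` lies in the base triangle or in a triangle added in
some generation. In such a triangle it moves straight to a distinguished point, the station, and
then from station to station through the preceding generations up to the centre. A station that is
reached at time `t` is the centre of a ball of radius `J t` in a convex set whose interior avoids
the curve. Since radii of balls in a convex set interpolate linearly along a segment, each leg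
keeps the John condition. -/

/-! ### Sets without bounded holes -/

/-- A set is full if its complement has no bounded holes. This is encoded without reference to
components: every bounded open set whose frontier lies in `A` is contained in `A`. -/
def IsFull {X : Type*} [TopologicalSpace X] [Bornology X] (A : Set X) : Prop :=
  ∀ V : Set X, IsOpen V → Bornology.IsBounded V → frontier V ⊆ A → V ⊆ A

/-- Adding to `A` the pieces of `U` that touch only a full part of `A` creates no holes: a hole of
`A` would split into holes of the full parts `A' i`. -/
theorem IsFull.of_pieces {X : Type*} [TopologicalSpace X] [Bornology X] {ι : Type*} [Finite ι]
    {A U : Set X} {T A' : ι → Set X} (hU : IsFull U) (hA : IsClosed A) (hAU : A ⊆ U)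
    (hUT : U ⊆ A ∪ ⋃ i, T i) (hT : ∀ i, IsClosed (T i))
    (hTT : Pairwise fun i j => T i ∩ T j ⊆ A) (hAT : ∀ i, A ∩ T i ⊆ A' i)
    (hA' : ∀ i, A' i ⊆ A) (hfull : ∀ i, IsFull (A' i)) : IsFull A := by
  intro V hVo hVb hVA x hxV
  by_contra hxA
  let W : ι → Set X := fun i => (V \ A) \ ⋃ j ∈ {j | j ≠ i}, T j
  have hVT : V \ A ⊆ ⋃ i, T i := fun z hz =>
    (hUT (hU V hVo hVb (hVA.trans hAU) hz.1)).resolve_left hz.2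
  have hWo : ∀ i, IsOpen (W i) := fun i =>
    (hVo.sdiff hA).sdiff ((Set.toFinite _).isClosed_biUnion fun j _ => hT j)
  have hWT : ∀ i, W i ⊆ T i := fun i z hz => by
    obtain ⟨j, hj⟩ := mem_iUnion.1 (hVT hz.1)
    by_contra hi
    exact hz.2 (mem_biUnion (show j ≠ i from fun h => hi (h ▸ hj)) hj)
  have hW : ∀ i, ∀ z ∈ T i, z ∈ V → z ∉ A → z ∈ W i := by
    refine fun i z hzi hzV hzA => ⟨⟨hzV, hzA⟩, fun hz => ?_⟩
    obtain ⟨j, hji, hzj⟩ := mem_iUnion₂.1 hz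
    exact hzA (hTT hji ⟨hzj, hzi⟩)
  have hfrontier : ∀ i, frontier (W i) ⊆ A' i := by
    refine fun i z hz => hAT i ⟨?_, closure_minimal (hWT i) (hT i) hz.1⟩
    by_contra hzA
    have hzV : z ∈ V := by
      by_contra hzV
      refine hzA (hVA ⟨closure_mono (fun _ hw => hw.1.1) hz.1, ?_⟩)
      rwa [hVo.interior_eq]
    rw [(hWo i).frontier_eq] at hz
    exact hz.2 (hW i z (closure_minimal (hWT i) (hT i) hz.1) hzV hzA)
  obtain ⟨i, hi⟩ := mem_iUnion.1 (hVT ⟨hxV, hxA⟩)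
  have hWb : Bornology.IsBounded (W i) := hVb.subset fun _ hw => hw.1.1
  exact hxA (hA' i (hfull i (W i) (hWo i) hWb (hfrontier i) (hW i x hi hxV hxA)))

theorem isFull_of_starConvex {E : Type*} [NormedAddCommGroup E] [NormedSpace ℝ E] {A : Set E}
    {c : E} (hA : StarConvex ℝ c A) (hne : A.Nonempty) : IsFull A := by
  intro V hVo hVb hVA x hxV
  by_contra hxA
  have hxc : x ≠ c := fun h => hxA (h ▸ hA.mem hne)
  let ray : ℝ → E := AffineMap.lineMap c x
  have hray : ∀ s ∈ Ici (1 : ℝ), ray s ∉ A := by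
    intro s (hs : 1 ≤ s) hsA
    refine hxA (hA.segment_subset hsA ?_)
    rw [segment_eq_image_lineMap]
    refine ⟨s⁻¹, ⟨by positivity, inv_le_one_of_one_le₀ hs⟩, ?_⟩
    rw [AffineMap.lineMap_lineMap_right, inv_mul_cancel₀ (by positivity),
      AffineMap.lineMap_apply_one]
  have hrayV : ray '' Ici 1 ⊆ V := by
    refine (isPreconnected_Ici.image _ AffineMap.lineMap_continuous.continuousOn
      ).subset_of_closure_inter_subset hVo ⟨x, ⟨1, self_mem_Ici, AffineMap.lineMap_apply_one c x⟩,
      hxV⟩ ?_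
    rintro _ ⟨hz, s, hs, rfl⟩
    by_contra hzV
    exact hray s hs (hVA ⟨hz, by rwa [hVo.interior_eq]⟩)
  obtain ⟨R, hR⟩ := isBounded_iff.1 hVb
  have hd : 0 < dist c x := dist_pos.2 hxc.symm
  let s := 1 + (|R| + 1) / dist c x
  have hs : 1 ≤ s := le_add_of_nonneg_right (by positivity)
  have hdist := hR (hrayV ⟨s, hs, rfl⟩) hxV
  rw [← AffineMap.lineMap_apply_one (k := ℝ) c x, dist_lineMap_lineMap, Real.dist_eq,
    add_sub_cancel_left, abs_of_nonneg (by positivity), div_mul_cancel₀ _ hd.ne'] at hdist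
  linarith [le_abs_self R]

/-! ### Contractions and invariant compact sets -/

theorem subset_of_isCompact_of_subset_iUnion_image {X : Type*} [PseudoMetricSpace X] {ι : Type*}
    {f : ι → X → X} {r : ℝ} {K T : Set X} (hK : IsCompact K) (hKf : K ⊆ ⋃ i, f i '' K)
    (hr₀ : 0 < r) (hr₁ : r < 1) (hf : ∀ i x y, dist (f i x) (f i y) ≤ r * dist x y)
    (hT : IsClosed T) (hTne : T.Nonempty) (hfT : ∀ i, MapsTo (f i) T T) : K ⊆ T := by
  intro x hx
  obtain ⟨p, hpK, hp⟩ := hK.exists_isMaxOn ⟨x, hx⟩ (continuous_infDist_pt T).continuousOn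
  obtain ⟨i, q, hqK, rfl⟩ := mem_iUnion.1 (hKf hpK)
  have hcontract : infDist (f i q) T ≤ r * infDist q T := by
    rw [← div_le_iff₀' hr₀, le_infDist hTne]
    intro t ht
    rw [div_le_iff₀' hr₀]
    exact (infDist_le_dist_of_mem (hfT i ht)).trans (hf i q t)
  have hmax : infDist q T ≤ infDist (f i q) T := hp hqK
  have hxp : infDist x T ≤ infDist (f i q) T := hp hx
  rw [hT.mem_iff_infDist_zero hTne]
  nlinarith [infDist_nonneg (x := x) (s := T)]

theorem mem_of_isCompact_of_isFixedPt {X : Type*} [MetricSpace X] {f : X → X} {r : ℝ} {K : Set X}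
    {e : X} (hK : IsCompact K) (hne : K.Nonempty) (hfK : MapsTo f K K) (hr : r < 1)
    (hf : ∀ x y, dist (f x) (f y) ≤ r * dist x y) (he : f e = e) : e ∈ K := by
  obtain ⟨p, hpK, hp⟩ := hK.exists_infDist_eq_dist hne e
  have hle : dist e p ≤ r * dist e p :=
    calc dist e p ≤ dist e (f p) := hp ▸ infDist_le_dist_of_mem (hfK hpK)
      _ = dist (f e) (f p) := by rw [he]
      _ ≤ r * dist e p := hf e p
  have : dist e p = 0 := by nlinarith [dist_nonneg (x := e) (y := p)]
  rwa [dist_eq_zero.1 this]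

/-! ### Similarities -/

section Similarity

variable {E : Type*} [NormedAddCommGroup E] [NormedSpace ℝ E] {r r' : ℝ} {S S' : E → E}

/-- `S` is a similarity with ratio `r`: a linear isometry scaled by `r`, followed by a
translation. -/
def IsSimilarity (r : ℝ) (S : E → E) : Prop :=
  0 < r ∧ ∃ (L : E ≃ₗᵢ[ℝ] E) (v : E), ∀ x, S x = r • L x + v

theorem isSimilarity_smul_add (hr : 0 < r) (v : E) : IsSimilarity r fun x => r • x + v :=
  ⟨hr, LinearIsometryEquiv.refl ℝ E, v, fun _ => rfl⟩

theorem IsSimilarity.comp (hS : IsSimilarity r S) (hS' : IsSimilarity r' S') :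
    IsSimilarity (r' * r) (S ∘ S') := by
  obtain ⟨hr, L, v, hL⟩ := hS
  obtain ⟨hr', L', v', hL'⟩ := hS'
  refine ⟨mul_pos hr' hr, L'.trans L, r • L v' + v, fun x => ?_⟩
  simp only [Function.comp_apply, hL, hL', map_add, map_smul, smul_add, smul_smul, mul_comm r',
    LinearIsometryEquiv.trans_apply, add_assoc]

theorem IsSimilarity.dist_map (hS : IsSimilarity r S) (x y : E) :
    dist (S x) (S y) = r * dist x y := by
  obtain ⟨hr, L, v, hL⟩ := hS
  rw [hL, hL, dist_add_right, dist_smul₀, L.dist_map, Real.norm_of_nonneg hr.le]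

theorem IsSimilarity.exists_homeomorph (hS : IsSimilarity r S) : ∃ e : E ≃ₜ E, ⇑e = S := by
  obtain ⟨hr, L, v, hL⟩ := hS
  exact ⟨(L.toHomeomorph.trans (Homeomorph.smulOfNeZero r hr.ne')).trans (Homeomorph.addRight v),
    funext fun x => (hL x).symm⟩

theorem IsSimilarity.exists_affineMap (hS : IsSimilarity r S) : ∃ f : E →ᵃ[ℝ] E, ⇑f = S := by
  obtain ⟨-, L, v, hL⟩ := hS
  exact ⟨(r • L.toLinearEquiv.toLinearMap).toAffineMap + AffineMap.const ℝ E v,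
    funext fun x => (hL x).symm⟩

theorem IsSimilarity.continuous (hS : IsSimilarity r S) : Continuous S := by
  obtain ⟨e, rfl⟩ := hS.exists_homeomorph
  exact e.continuous

theorem IsSimilarity.injective (hS : IsSimilarity r S) : Function.Injective S := by
  obtain ⟨e, rfl⟩ := hS.exists_homeomorph
  exact e.injective

theorem IsSimilarity.isClosed_image (hS : IsSimilarity r S) {A : Set E} (hA : IsClosed A) :
    IsClosed (S '' A) := by
  obtain ⟨e, rfl⟩ := hS.exists_homeomorph
  exact e.isClosedMap A hA

theorem IsSimilarity.interior_image (hS : IsSimilarity r S) (A : Set E) :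
    interior (S '' A) = S '' interior A := by
  obtain ⟨e, rfl⟩ := hS.exists_homeomorph
  exact (e.image_interior A).symm

theorem IsSimilarity.convex_image (hS : IsSimilarity r S) {A : Set E} (hA : Convex ℝ A) :
    Convex ℝ (S '' A) := by
  obtain ⟨f, rfl⟩ := hS.exists_affineMap
  exact hA.affine_image f

theorem IsSimilarity.starConvex_image (hS : IsSimilarity r S) {A : Set E} {x : E}
    (hA : StarConvex ℝ x A) : StarConvex ℝ (S x) (S '' A) := by
  obtain ⟨f, rfl⟩ := hS.exists_affineMap
  exact hA.affine_image f

theorem IsSimilarity.closedBall_subset_image (hS : IsSimilarity r S) {A : Set E} {x : E} {a : ℝ}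
    (hA : closedBall x a ⊆ A) : closedBall (S x) (r * a) ⊆ S '' A := by
  obtain ⟨e, he⟩ := hS.exists_homeomorph
  intro z hz
  obtain ⟨y, rfl⟩ : ∃ y, S y = z := he ▸ e.surjective z
  rw [mem_closedBall, hS.dist_map, mul_le_mul_iff_right₀ hS.1] at hz
  exact mem_image_of_mem S (hA hz)

theorem IsFull.image_similarity (hS : IsSimilarity r S) {A : Set E} (hA : IsFull A) :
    IsFull (S '' A) := by
  intro V hVo hVb hVA x hx
  obtain ⟨e, he⟩ := hS.exists_homeomorph
  have hbounded : Bornology.IsBounded (S ⁻¹' V) := by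
    obtain ⟨R, hR⟩ := isBounded_iff.1 hVb
    refine isBounded_iff.2 ⟨R / r, fun y hy z hz => ?_⟩
    rw [le_div_iff₀' hS.1, ← hS.dist_map]
    exact hR hy hz
  have hfrontier : frontier (S ⁻¹' V) ⊆ A := by
    rw [← he, ← e.preimage_frontier, he]
    exact fun y hy => (hS.injective.mem_set_image).1 (hVA hy)
  obtain ⟨y, rfl⟩ : ∃ y, S y = x := he ▸ e.surjective x
  exact mem_image_of_mem S (hA _ (hVo.preimage hS.continuous) hbounded hfrontier hx)

end Similarity

/-! ### John arcs -/

section JohnArc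

variable {E : Type*}

/-- The point `x` can be joined to `y` by a unit-speed curve of length `t` that keeps the
`J`-John distance from the obstacle `Γ`. As in `IsJohnDomain`, unit speed is encoded as
`1`-Lipschitz continuity; so `t` is the time at which `y` is reached. -/
def HasJohnArc [PseudoMetricSpace E] (Γ : Set E) (J : ℝ) (x : E) (t : ℝ) (y : E) : Prop :=
  0 ≤ t ∧ ∃ γ : ℝ → E, LipschitzOnWith 1 γ (Icc 0 t) ∧ γ 0 = x ∧ γ t = y ∧
    ∀ τ ∈ Icc 0 t, ∀ z ∈ Γ, J * τ ≤ dist (γ τ) z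

theorem HasJohnArc.refl [PseudoMetricSpace E] (Γ : Set E) (J : ℝ) (x : E) :
    HasJohnArc Γ J x 0 x := by
  refine ⟨le_rfl, fun _ => x, LipschitzWith.const' x |>.lipschitzOnWith, rfl, rfl, ?_⟩
  intro τ hτ z _
  rw [le_antisymm hτ.2 hτ.1, mul_zero]
  exact dist_nonneg

theorem lipschitzOnWith_Icc_ite [PseudoMetricSpace E] {K : NNReal} {f g : ℝ → E} {a b c : ℝ}
    (hf : LipschitzOnWith K f (Icc a b)) (hg : LipschitzOnWith K g (Icc b c)) (hfg : f b = g b) :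
    LipschitzOnWith K (fun τ => if τ ≤ b then f τ else g τ) (Icc a c) := by
  refine LipschitzOnWith.of_dist_le_mul fun σ hσ τ hτ => ?_
  wlog hστ : σ ≤ τ generalizing σ τ
  · rw [dist_comm, dist_comm σ]
    exact this τ hτ σ hσ (le_of_not_ge hστ)
  rcases le_or_gt τ b with hτb | hτb
  · simp only [hτb, hστ.trans hτb, if_true]
    exact hf.dist_le_mul σ ⟨hσ.1, hστ.trans hτb⟩ τ ⟨hτ.1, hτb⟩
  rcases le_or_gt σ b with hσb | hσb
  · simp only [hσb, hτb.not_ge, if_true, if_false]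
    calc dist (f σ) (g τ) ≤ dist (f σ) (f b) + dist (g b) (g τ) := hfg ▸ dist_triangle _ _ _
      _ ≤ K * dist σ b + K * dist b τ :=
        add_le_add (hf.dist_le_mul σ ⟨hσ.1, hσb⟩ b ⟨hσ.1.trans hσb, le_rfl⟩)
          (hg.dist_le_mul b ⟨le_rfl, hτb.le.trans hτ.2⟩ τ ⟨hτb.le, hτ.2⟩)
      _ = K * dist σ τ := by
        rw [Real.dist_eq, Real.dist_eq, Real.dist_eq, abs_of_nonpos, abs_of_nonpos, abs_of_nonpos]
          <;> linarith
  · simp only [hσb.not_ge, hτb.not_ge, if_false]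
    exact hg.dist_le_mul σ ⟨hσb.le, hσ.2⟩ τ ⟨hτb.le, hτ.2⟩

theorem HasJohnArc.concat [PseudoMetricSpace E] {Γ : Set E} {J t t' : ℝ} {x y : E} {σ : ℝ → E}
    (h : HasJohnArc Γ J x t y) (htt' : t ≤ t') (hσ : LipschitzOnWith 1 σ (Icc t t'))
    (hσt : σ t = y) (hσΓ : ∀ τ ∈ Icc t t', ∀ z ∈ Γ, J * τ ≤ dist (σ τ) z) :
    HasJohnArc Γ J x t' (σ t') := by
  obtain ⟨ht, γ, hγ, hγ₀, hγt, hγΓ⟩ := h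
  have heq : γ t = σ t := hγt.trans hσt.symm
  refine ⟨ht.trans htt', fun τ => if τ ≤ t then γ τ else σ τ, lipschitzOnWith_Icc_ite hγ hσ heq,
    (if_pos ht).trans hγ₀, ?_, fun τ hτ => ?_⟩
  · rcases htt'.eq_or_lt with rfl | hlt
    · exact (if_pos le_rfl).trans heq
    · exact if_neg hlt.not_ge
  · beta_reduce
    split_ifs with h
    · exact hγΓ τ ⟨hτ.1, h⟩
    · exact hσΓ τ ⟨(not_le.1 h).le, hτ.2⟩

variable [NormedAddCommGroup E] [NormedSpace ℝ E]

theorem closedBall_lineMap_subset {C : Set E} (hC : Convex ℝ C) {x y : E} {r s u : ℝ}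
    (hr : 0 ≤ r) (hs : 0 ≤ s) (hx : closedBall x r ⊆ C) (hy : closedBall y s ⊆ C)
    (hu : u ∈ Icc (0 : ℝ) 1) :
    closedBall (AffineMap.lineMap x y u) (AffineMap.lineMap r s u) ⊆ C := by
  intro z hz
  set m : E := AffineMap.lineMap x y u with hm
  set ρ : ℝ := AffineMap.lineMap r s u with hρ
  rw [mem_closedBall, dist_eq_norm] at hz
  let w : E := ρ⁻¹ • (z - m)
  have hρw : ρ • w = z - m := by
    rcases eq_or_ne ρ 0 with h | h
    · rw [h, norm_le_zero_iff] at hz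
      rw [h, hz, zero_smul]
    · exact smul_inv_smul₀ h _
  have hw : ‖w‖ ≤ 1 := by
    rw [norm_smul, norm_inv, Real.norm_of_nonneg ((norm_nonneg _).trans hz)]
    exact inv_mul_le_one_of_le₀ hz ((norm_nonneg _).trans hz)
  have hmem : ∀ {p : E} {a : ℝ}, 0 ≤ a → a • w + p ∈ closedBall p a := fun ha => by
    rw [mem_closedBall, dist_eq_norm, add_sub_cancel_right, norm_smul, Real.norm_of_nonneg ha]
    exact mul_le_of_le_one_right ha hw
  have hz' : z = (1 - u) • (r • w + x) + u • (s • w + y) := by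
    rw [← sub_add_cancel z m, ← hρw, hm, hρ, AffineMap.lineMap_apply_module,
      AffineMap.lineMap_apply_module]
    module
  rw [hz']
  exact hC (hx (hmem hr)) (hy (hmem hs)) (sub_nonneg.2 hu.2) hu.1 (sub_add_cancel 1 u)

variable {Γ C : Set E} {J t t' : ℝ} {x y y' : E}

/-- Along a segment the radii of balls contained in a convex set can be interpolated linearly, so
the John condition need only be checked at the two ends. -/
theorem HasJohnArc.extend (hJ : 0 ≤ J) (h : HasJohnArc Γ J x t y) (hC : Convex ℝ C)
    (hCΓ : Disjoint (interior C) Γ) (hy : closedBall y (J * t) ⊆ C)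
    (hy' : closedBall y' (J * t') ⊆ C) (hdist : dist y y' ≤ t' - t) : HasJohnArc Γ J x t' y' := by
  have htt' : t ≤ t' := sub_nonneg.1 (dist_nonneg.trans hdist)
  rcases htt'.eq_or_lt with rfl | hlt
  · rwa [← dist_le_zero.1 (hdist.trans_eq (sub_self t))]
  have hpos : 0 < t' - t := sub_pos.2 hlt
  let u : ℝ → ℝ := fun τ => (τ - t) / (t' - t)
  let σ : ℝ → E := fun τ => AffineMap.lineMap y y' (u τ)
  have hσt : σ t = y := by simp only [σ, u, sub_self, zero_div, AffineMap.lineMap_apply_zero]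
  have hσt' : σ t' = y' := by simp only [σ, u, div_self hpos.ne', AffineMap.lineMap_apply_one]
  have hσ : LipschitzOnWith 1 σ (Icc t t') := by
    refine LipschitzOnWith.of_dist_le_mul fun τ₁ _ τ₂ _ => ?_
    rw [dist_lineMap_lineMap, Real.dist_eq, Real.dist_eq, ← sub_div, sub_sub_sub_cancel_right,
      abs_div, abs_of_pos hpos, NNReal.coe_one, one_mul, div_mul_eq_mul_div, div_le_iff₀ hpos]
    exact mul_le_mul_of_nonneg_left hdist (abs_nonneg _)
  rw [← hσt']
  refine h.concat htt' hσ hσt fun τ hτ z hz => ?_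
  have hu : u τ ∈ Icc (0 : ℝ) 1 :=
    ⟨div_nonneg (sub_nonneg.2 hτ.1) hpos.le, (div_le_one hpos).2 (by linarith [hτ.2])⟩
  have hradius : AffineMap.lineMap (J * t) (J * t') (u τ) = J * τ := by
    rw [AffineMap.lineMap_apply_ring']
    linear_combination J * div_mul_cancel₀ (τ - t) hpos.ne'
  have hball := closedBall_lineMap_subset hC (mul_nonneg hJ h.1)
    (mul_nonneg hJ (h.1.trans htt')) hy hy' hu
  rw [hradius] at hball
  by_contra! hlt
  exact disjoint_left.1 hCΓ (interior_mono hball (ball_subset_interior_closedBall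
    (mem_ball'.2 hlt))) hz

end JohnArc

/-! ### Complementary components -/

theorem frontier_connectedComponentIn_compl_subset {X : Type*} [TopologicalSpace X]
    [LocallyConnectedSpace X] {A : Set X} (hA : IsClosed A) (x : X) :
    frontier (connectedComponentIn Aᶜ x) ⊆ A := by
  intro z hz
  by_contra hzA
  rw [hA.isOpen_compl.connectedComponentIn.frontier_eq] at hz
  by_cases hx : x ∈ Aᶜ
  · have hpre : IsPreconnected (insert z (connectedComponentIn Aᶜ x)) :=
      isPreconnected_connectedComponentIn.subset_closure (subset_insert _ _)
        (insert_subset hz.1 subset_closure)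
    exact hz.2 (hpre.subset_connectedComponentIn (mem_insert_of_mem _ (mem_connectedComponentIn hx))
      (insert_subset hzA (connectedComponentIn_subset _ _)) (mem_insert _ _))
  · rw [connectedComponentIn_eq_empty hx, closure_empty] at hz
    exact hz.1

theorem isJohnDomain_of_hasJohnArc {Γ : Set Plane} {J : ℝ} (hΓ : IsClosed Γ) (hJ : 0 < J)
    {x₁ y : Plane} (hx₁ : x₁ ∈ Γᶜ) (hb : Bornology.IsBounded (connectedComponentIn Γᶜ x₁))
    (h : ∀ x ∈ connectedComponentIn Γᶜ x₁, ∃ t, HasJohnArc Γ J x t y) :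
    IsJohnDomain (connectedComponentIn Γᶜ x₁) J := by
  have hfr : (frontier (connectedComponentIn Γᶜ x₁)).Nonempty := by
    refine nonempty_frontier_iff.2 ⟨⟨x₁, mem_connectedComponentIn hx₁⟩, fun hu => ?_⟩
    exact NormedSpace.unbounded_univ ℝ Plane (hu ▸ hb)
  have hmem : ∀ x ∈ connectedComponentIn Γᶜ x₁, ∀ (t : ℝ) (γ : ℝ → Plane),
      LipschitzOnWith 1 γ (Icc 0 t) → γ 0 = x →
      (∀ τ ∈ Icc 0 t, ∀ z ∈ Γ, J * τ ≤ dist (γ τ) z) →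
      ∀ τ ∈ Icc 0 t, γ τ ∈ connectedComponentIn Γᶜ x₁ := by
    intro x hx t γ hγ hγ₀ hγΓ τ hτ
    rw [connectedComponentIn_eq hx]
    refine (isPreconnected_Icc.image γ hγ.continuousOn).subset_connectedComponentIn
      ⟨0, ⟨le_rfl, hτ.1.trans hτ.2⟩, hγ₀⟩ ?_ ⟨τ, hτ, rfl⟩
    rintro _ ⟨σ, hσ, rfl⟩ hz
    rcases hσ.1.eq_or_lt with rfl | hpos
    · exact connectedComponentIn_subset _ _ hx (hγ₀ ▸ hz)
    · have := hγΓ σ hσ _ hz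
      rw [dist_self] at this
      exact absurd this (mul_pos hJ hpos).not_ge
  refine ⟨y, ?_, fun x hx => ?_⟩
  · obtain ⟨t, ht, γ, hγ, hγ₀, rfl, hγΓ⟩ := h x₁ (mem_connectedComponentIn hx₁)
    exact hmem x₁ (mem_connectedComponentIn hx₁) t γ hγ hγ₀ hγΓ t ⟨ht, le_rfl⟩
  · obtain ⟨t, ht, γ, hγ, hγ₀, hγt, hγΓ⟩ := h x hx
    refine ⟨t, γ, ht, hγ, hγ₀, hγt, fun τ hτ => ⟨hmem x hx t γ hγ hγ₀ hγΓ τ hτ, ?_⟩⟩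
    rw [le_infDist hfr]
    exact fun z hz => hγΓ τ hτ z (frontier_connectedComponentIn_compl_subset hΓ x₁ hz)

/-! ### Coordinates in the plane -/

@[simp] theorem pt_apply_zero (a b : ℝ) : pt a b 0 = a := rfl

@[simp] theorem pt_apply_one (a b : ℝ) : pt a b 1 = b := rfl

theorem plane_ext {p q : Plane} (h₀ : p 0 = q 0) (h₁ : p 1 = q 1) : p = q := by
  ext i
  fin_cases i
  exacts [h₀, h₁]

theorem dist_sq_plane (p q : Plane) : dist p q ^ 2 = (p 0 - q 0) ^ 2 + (p 1 - q 1) ^ 2 := by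
  rw [EuclideanSpace.dist_sq_eq, Fin.sum_univ_two, Real.dist_eq, Real.dist_eq, sq_abs, sq_abs]

theorem dist_plane_le {p q : Plane} {d : ℝ} (hd : 0 ≤ d)
    (h : (p 0 - q 0) ^ 2 + (p 1 - q 1) ^ 2 ≤ d ^ 2) : dist p q ≤ d :=
  le_of_sq_le_sq ((dist_sq_plane p q).trans_le h) hd

/-- The closed half-plane where `a x + b y + d` is nonnegative. It degenerates to `∅` or the whole
plane when `a = b = 0`. -/
def halfPlane (a b d : ℝ) : Set Plane := {p | 0 ≤ a * p 0 + b * p 1 + d}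

section HalfPlane

variable {a b d : ℝ}

theorem mem_halfPlane {p : Plane} : p ∈ halfPlane a b d ↔ 0 ≤ a * p 0 + b * p 1 + d := Iff.rfl

theorem isClosed_halfPlane : IsClosed (halfPlane a b d) :=
  isClosed_le continuous_const (by fun_prop)

theorem convex_halfPlane : Convex ℝ (halfPlane a b d) := by
  intro p hp q hq s t hs ht hst
  rw [mem_halfPlane] at hp hq ⊢
  have hsplit : a * (s • p + t • q) 0 + b * (s • p + t • q) 1 + d =
      s * (a * p 0 + b * p 1 + d) + t * (a * q 0 + b * q 1 + d) := by
    simp only [PiLp.add_apply, PiLp.smul_apply, smul_eq_mul]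
    linear_combination (-d) * hst
  rw [hsplit]
  positivity

/-- The affine function `a x + b y + d` is `n`-Lipschitz for `n` the norm of `(a, b)`. -/
theorem closedBall_subset_halfPlane {n r : ℝ} {p : Plane} (hn : 0 ≤ n)
    (habn : a ^ 2 + b ^ 2 = n ^ 2) (hr : n * r ≤ a * p 0 + b * p 1 + d) :
    closedBall p r ⊆ halfPlane a b d := by
  intro q hq
  have hle : |a * (p 0 - q 0) + b * (p 1 - q 1)| ≤ n * dist q p := by
    refine abs_le_of_sq_le_sq ?_ (by positivity)
    rw [mul_pow, dist_comm, dist_sq_plane, ← habn]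
    nlinarith [sq_nonneg (a * (p 1 - q 1) - b * (p 0 - q 0))]
  have hdist : n * dist q p ≤ n * r := mul_le_mul_of_nonneg_left hq hn
  rw [mem_halfPlane]
  linarith [(abs_le.1 hle).2]

theorem pos_of_mem_interior_halfPlane {p : Plane} (hab : 0 < a ^ 2 + b ^ 2)
    (hp : p ∈ interior (halfPlane a b d)) : 0 < a * p 0 + b * p 1 + d := by
  obtain ⟨ε, hε, hball⟩ := Metric.nhds_basis_closedBall.mem_iff.1 (mem_interior_iff_mem_nhds.1 hp)
  have hn : 0 < √(a ^ 2 + b ^ 2) := Real.sqrt_pos.2 hab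
  have hsq : √(a ^ 2 + b ^ 2) ^ 2 = a ^ 2 + b ^ 2 := Real.sq_sqrt hab.le
  let δ := ε / √(a ^ 2 + b ^ 2)
  have hδ : 0 < δ := div_pos hε hn
  have hδε : δ * √(a ^ 2 + b ^ 2) = ε := div_mul_cancel₀ ε hn.ne'
  have hdist : dist (pt (p 0 - δ * a) (p 1 - δ * b)) p ≤ ε := dist_plane_le hε.le <| by
    rw [pt_apply_zero, pt_apply_one, ← hδε, mul_pow, hsq]
    exact le_of_eq (by ring)
  have hmem := hball hdist
  simp only [mem_halfPlane, pt_apply_zero, pt_apply_one] at hmem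
  nlinarith [mul_pos hδ hab]

end HalfPlane

theorem exists_linearIsometryEquiv_plane {a b c d : ℝ} (h₁ : a ^ 2 + c ^ 2 = 1)
    (h₂ : b ^ 2 + d ^ 2 = 1) (h₁₂ : a * b + c * d = 0) :
    ∃ L : Plane ≃ₗᵢ[ℝ] Plane, ∀ p, L p = pt (a * p 0 + b * p 1) (c * p 0 + d * p 1) := by
  let f : Plane →ₗ[ℝ] Plane :=
    { toFun := fun p => pt (a * p 0 + b * p 1) (c * p 0 + d * p 1)
      map_add' := fun p q => by
        apply plane_ext <;> simp only [pt_apply_zero, pt_apply_one, PiLp.add_apply] <;> ring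
      map_smul' := fun r p => by
        apply plane_ext <;>
          simp only [pt_apply_zero, pt_apply_one, PiLp.smul_apply, smul_eq_mul,
            RingHom.id_apply] <;> ring }
  have hf : ∀ p, ‖f p‖ = ‖p‖ := fun p => by
    have hsq : ‖f p‖ ^ 2 = ‖p‖ ^ 2 := by
      rw [EuclideanSpace.norm_sq_eq, EuclideanSpace.norm_sq_eq, Fin.sum_univ_two, Fin.sum_univ_two]
      simp only [f, LinearMap.coe_mk, AddHom.coe_mk, pt_apply_zero, pt_apply_one,
        Real.norm_eq_abs, sq_abs]
      linear_combination p 0 ^ 2 * h₁ + p 1 ^ 2 * h₂ + 2 * p 0 * p 1 * h₁₂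
    exact (sq_eq_sq₀ (norm_nonneg _) (norm_nonneg _)).1 hsq
  exact ⟨LinearIsometry.toLinearIsometryEquiv ⟨f, hf⟩ rfl, fun p => rfl⟩

theorem isSimilarity_rot_smul_add {r : ℝ} (hr : 0 < r) (τ : ℝ) (v : Plane) :
    IsSimilarity r fun x => rot τ (r • x) + v := by
  obtain ⟨L, hL⟩ := exists_linearIsometryEquiv_plane (a := Real.cos τ) (b := -Real.sin τ)
    (c := Real.sin τ) (d := Real.cos τ) (Real.cos_sq_add_sin_sq τ)
    (by rw [neg_sq, Real.sin_sq_add_cos_sq]) (by ring)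
  refine ⟨hr, L, v, fun x => ?_⟩
  rw [hL]
  apply plane_ext <;> simp only [rot, PiLp.add_apply, PiLp.smul_apply, smul_eq_mul,
    pt_apply_zero, pt_apply_one] <;> ring

/-! ### The von Koch maps -/

section KochMaps

variable {l : ℝ}

/-- The height `√(l - 1/4)` of the apex of the von Koch generator over the unit segment. The
oblique legs of the generator have horizontal extent `1/2 - l`. -/
def kochHeight (l : ℝ) : ℝ := √(l - 1 / 4)

theorem kochHeight_sq (hl : l ∈ Ico (1 / 3 : ℝ) (1 / 2)) : kochHeight l ^ 2 = l - 1 / 4 :=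
  Real.sq_sqrt (by linarith [hl.1])

theorem kochHeight_pos (hl : l ∈ Ico (1 / 3 : ℝ) (1 / 2)) : 0 < kochHeight l :=
  Real.sqrt_pos.2 (by linarith [hl.1])

theorem cos_kochAngle (hl : l ∈ Ico (1 / 3 : ℝ) (1 / 2)) :
    Real.cos (kochAngle l) = (1 / 2 - l) / l := by
  have hl₀ : 0 < l := by linarith [hl.1]
  refine Real.cos_arccos ?_ ?_
  · linarith [div_nonneg (sub_nonneg.2 hl.2.le) hl₀.le]
  · rw [div_le_one hl₀]
    linarith [hl.1]

theorem sin_kochAngle (hl : l ∈ Ico (1 / 3 : ℝ) (1 / 2)) :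
    Real.sin (kochAngle l) = kochHeight l / l := by
  have hl₀ : 0 < l := by linarith [hl.1]
  rw [kochAngle, Real.sin_arccos, ← Real.sqrt_sq (div_nonneg (kochHeight_pos hl).le hl₀.le),
    div_pow (kochHeight l), kochHeight_sq hl]
  congr 1
  field_simp
  ring

theorem kochF_zero_apply (p : Plane) : kochF l 0 p = pt (l * p 0) (l * p 1) :=
  plane_ext rfl rfl

theorem kochF_one_apply (hl : l ∈ Ico (1 / 3 : ℝ) (1 / 2)) (p : Plane) :
    kochF l 1 p = pt ((1 / 2 - l) * p 0 - kochHeight l * p 1 + l)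
      (kochHeight l * p 0 + (1 / 2 - l) * p 1) := by
  have hl₀ : l ≠ 0 := by linarith [hl.1]
  apply plane_ext <;>
    (simp only [kochF, rot, cos_kochAngle hl, sin_kochAngle hl, Matrix.cons_val_one,
      Matrix.cons_val_zero, PiLp.add_apply, PiLp.smul_apply, smul_eq_mul, pt_apply_zero,
      pt_apply_one, add_zero]
     field_simp)

theorem kochF_two_apply (hl : l ∈ Ico (1 / 3 : ℝ) (1 / 2)) (p : Plane) :
    kochF l 2 p = pt ((1 / 2 - l) * p 0 + kochHeight l * p 1 + 1 / 2)
      (-kochHeight l * p 0 + (1 / 2 - l) * p 1 + kochHeight l) := by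
  have hl₀ : l ≠ 0 := by linarith [hl.1]
  have hheight : √(l - 1 / 4) = kochHeight l := rfl
  apply plane_ext <;>
    (simp only [kochF, rot, cos_kochAngle hl, sin_kochAngle hl, Matrix.cons_val, Real.cos_neg,
      Real.sin_neg, PiLp.add_apply, PiLp.smul_apply, smul_eq_mul, pt_apply_zero, pt_apply_one,
      hheight, neg_mul, sub_neg_eq_add]
     field_simp)

theorem kochF_three_apply (p : Plane) : kochF l 3 p = pt (l * p 0 + (1 - l)) (l * p 1) :=
  plane_ext rfl (add_zero _)

theorem isSimilarity_kochF (hl : 0 < l) (i : Fin 4) : IsSimilarity l (kochF l i) := by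
  fin_cases i
  · have := isSimilarity_smul_add hl (0 : Plane)
    simp only [add_zero] at this
    exact this
  · exact isSimilarity_rot_smul_add hl _ _
  · exact isSimilarity_rot_smul_add hl _ _
  · exact isSimilarity_smul_add hl _

/-- The reflection in the symmetry axis `x = 1/2` of the von Koch generator. -/
def reflect (p : Plane) : Plane := pt (1 - p 0) (p 1)

@[simp] theorem reflect_apply_zero (p : Plane) : reflect p 0 = 1 - p 0 := rfl

@[simp] theorem reflect_apply_one (p : Plane) : reflect p 1 = p 1 := rfl

@[simp] theorem reflect_reflect (p : Plane) : reflect (reflect p) = p :=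
  plane_ext (sub_sub_cancel 1 (p 0)) rfl

theorem dist_reflect (p q : Plane) : dist (reflect p) (reflect q) = dist p q := by
  rw [← sq_eq_sq₀ dist_nonneg dist_nonneg, dist_sq_plane, dist_sq_plane]
  simp only [reflect_apply_zero, reflect_apply_one]
  ring

@[elab_as_elim]
theorem forall_of_rev {P : Fin 4 → Prop} (h₀ : P 0) (h₁ : P 1) (hrev : ∀ i, P i → P i.rev)
    (i : Fin 4) : P i := by
  fin_cases i
  exacts [h₀, h₁, hrev 1 h₁, hrev 0 h₀]

theorem kochF_rev_apply (hl : l ∈ Ico (1 / 3 : ℝ) (1 / 2)) (i : Fin 4) (p : Plane) :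
    kochF l i.rev p = reflect (kochF l i (reflect p)) := by
  revert p
  refine forall_of_rev (fun p => ?_) (fun p => ?_) (fun i hi p => ?_) i
  · change kochF l 3 p = _
    rw [kochF_zero_apply, kochF_three_apply]
    apply plane_ext <;> simp only [reflect_apply_zero, reflect_apply_one, pt_apply_zero,
      pt_apply_one]
    ring
  · change kochF l 2 p = _
    rw [kochF_one_apply hl, kochF_two_apply hl]
    apply plane_ext <;> simp only [reflect_apply_zero, reflect_apply_one, pt_apply_zero,
      pt_apply_one] <;> ring
  · rw [hi, reflect_reflect, reflect_reflect, Fin.rev_rev]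

theorem mapsTo_kochF_rev (hl : l ∈ Ico (1 / 3 : ℝ) (1 / 2)) {A B : Set Plane}
    (hA : MapsTo reflect A A) (hB : MapsTo reflect B B) {i : Fin 4} (h : MapsTo (kochF l i) A B) :
    MapsTo (kochF l i.rev) A B := fun p hp => by
  rw [kochF_rev_apply hl]
  exact hB (h (hA hp))

end KochMaps

/-! ### The triangles of the von Koch construction -/

section KochTriangles

variable {l : ℝ}

/-- The triangle spanned by the von Koch generator: its base is the unit segment and its apex is
the middle vertex of the generator. -/
def kochTriangle (l : ℝ) : Set Plane :=
  halfPlane 0 1 0 ∩ halfPlane (2 * kochHeight l) (-1) 0 ∩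
    halfPlane (-(2 * kochHeight l)) (-1) (2 * kochHeight l)

/-- The wedge with vertex at the apex of the generator that lies between the two oblique legs. -/
def toothWedge (l : ℝ) : Set Plane :=
  halfPlane (kochHeight l) (-(1 / 2 - l)) (-(kochHeight l * l)) ∩
    halfPlane (-kochHeight l) (-(1 / 2 - l)) (kochHeight l * (1 - l))

/-- The triangle that the generator adds above the unit segment. -/
def tooth (l : ℝ) : Set Plane := toothWedge l ∩ halfPlane 0 1 0

/-- The two half-planes whose boundary lines leave the ends of the unit segment downwards at the
apex angle of `tooth`. -/
def lowerWedge (l : ℝ) : Set Plane :=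
  halfPlane (2 * kochHeight l * (1 / 2 - l)) (kochHeight l ^ 2 - (1 / 2 - l) ^ 2) 0 ∩
    halfPlane (-(2 * kochHeight l * (1 / 2 - l))) (kochHeight l ^ 2 - (1 / 2 - l) ^ 2)
      (2 * kochHeight l * (1 / 2 - l))

/-- The isosceles triangle below the unit segment whose base angles equal the apex angle of
`tooth`. Its copy on a leg of a tooth fits into that tooth, and its copy on an outer edge of the
generator fits into itself. -/
def lowerTriangle (l : ℝ) : Set Plane := lowerWedge l ∩ halfPlane 0 (-1) 0

/-- The end points of the von Koch curve. -/
def kochEndpoints : Set Plane := {pt 0 0, pt 1 0}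

theorem mem_kochTriangle {p : Plane} : p ∈ kochTriangle l ↔
    0 ≤ p 1 ∧ p 1 ≤ 2 * kochHeight l * p 0 ∧ p 1 ≤ 2 * kochHeight l * (1 - p 0) := by
  simp only [kochTriangle, mem_inter_iff, mem_halfPlane, and_assoc]
  refine and_congr ?_ (and_congr ?_ ?_) <;> constructor <;> intro h <;> linarith

theorem mem_toothWedge {p : Plane} : p ∈ toothWedge l ↔
    (1 / 2 - l) * p 1 ≤ kochHeight l * (p 0 - l) ∧
      (1 / 2 - l) * p 1 ≤ kochHeight l * (1 - l - p 0) := by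
  simp only [toothWedge, mem_inter_iff, mem_halfPlane]
  refine and_congr ?_ ?_ <;> constructor <;> intro h <;> linarith

theorem mem_tooth {p : Plane} : p ∈ tooth l ↔ p ∈ toothWedge l ∧ 0 ≤ p 1 := by
  simp only [tooth, mem_inter_iff, mem_halfPlane, zero_mul, one_mul, zero_add, add_zero]

theorem mem_lowerWedge {p : Plane} : p ∈ lowerWedge l ↔
    0 ≤ 2 * kochHeight l * (1 / 2 - l) * p 0 + (kochHeight l ^ 2 - (1 / 2 - l) ^ 2) * p 1 ∧
    0 ≤ 2 * kochHeight l * (1 / 2 - l) * (1 - p 0) +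
      (kochHeight l ^ 2 - (1 / 2 - l) ^ 2) * p 1 := by
  simp only [lowerWedge, mem_inter_iff, mem_halfPlane]
  refine and_congr ?_ ?_ <;> constructor <;> intro h <;> linarith

theorem mem_lowerTriangle {p : Plane} : p ∈ lowerTriangle l ↔ p ∈ lowerWedge l ∧ p 1 ≤ 0 := by
  simp only [lowerTriangle, mem_inter_iff, mem_halfPlane, zero_mul, neg_one_mul, zero_add,
    add_zero, Left.nonneg_neg_iff]

theorem isClosed_kochTriangle : IsClosed (kochTriangle l) :=
  (isClosed_halfPlane.inter isClosed_halfPlane).inter isClosed_halfPlane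

theorem isClosed_tooth : IsClosed (tooth l) :=
  (isClosed_halfPlane.inter isClosed_halfPlane).inter isClosed_halfPlane

theorem convex_kochTriangle : Convex ℝ (kochTriangle l) :=
  (convex_halfPlane.inter convex_halfPlane).inter convex_halfPlane

theorem convex_toothWedge : Convex ℝ (toothWedge l) := convex_halfPlane.inter convex_halfPlane

theorem convex_tooth : Convex ℝ (tooth l) := convex_toothWedge.inter convex_halfPlane

theorem convex_lowerWedge : Convex ℝ (lowerWedge l) := convex_halfPlane.inter convex_halfPlane

theorem convex_lowerTriangle : Convex ℝ (lowerTriangle l) :=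
  convex_lowerWedge.inter convex_halfPlane

theorem mapsTo_reflect_kochTriangle : MapsTo reflect (kochTriangle l) (kochTriangle l) :=
  fun p hp => by
    obtain ⟨h₀, h₁, h₂⟩ := mem_kochTriangle.1 hp
    exact mem_kochTriangle.2 ⟨h₀, h₂, by simpa only [reflect_apply_zero, sub_sub_cancel]⟩

theorem mapsTo_reflect_tooth : MapsTo reflect (tooth l) (tooth l) := fun p hp => by
  simp only [mem_tooth, mem_toothWedge, reflect_apply_zero, reflect_apply_one] at hp ⊢
  exact ⟨⟨by linarith [hp.1.2], by linarith [hp.1.1]⟩, hp.2⟩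

theorem mapsTo_reflect_lowerTriangle : MapsTo reflect (lowerTriangle l) (lowerTriangle l) :=
  fun p hp => by
    simp only [mem_lowerTriangle, mem_lowerWedge, reflect_apply_zero, reflect_apply_one,
      sub_sub_cancel] at hp ⊢
    exact ⟨⟨hp.1.2, hp.1.1⟩, hp.2⟩

theorem mapsTo_reflect_kochEndpoints : MapsTo reflect kochEndpoints kochEndpoints := by
  rintro p (rfl | rfl)
  · exact Or.inr (plane_ext (sub_zero 1) rfl)
  · exact Or.inl (plane_ext (sub_self 1) rfl)

theorem mem_Icc_of_mem_kochTriangle (hl : l ∈ Ico (1 / 3 : ℝ) (1 / 2)) {p : Plane}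
    (hp : p ∈ kochTriangle l) : p 0 ∈ Icc (0 : ℝ) 1 := by
  obtain ⟨h₀, h₁, h₂⟩ := mem_kochTriangle.1 hp
  have hh := kochHeight_pos hl
  constructor <;> nlinarith

theorem mapsTo_kochF_kochTriangle (hl : l ∈ Ico (1 / 3 : ℝ) (1 / 2)) (i : Fin 4) :
    MapsTo (kochF l i) (kochTriangle l) (kochTriangle l) := by
  have hh := kochHeight_pos hl
  have hsq := kochHeight_sq hl
  refine forall_of_rev ?_ ?_ (fun i => mapsTo_kochF_rev hl mapsTo_reflect_kochTriangle
    mapsTo_reflect_kochTriangle) i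
  · intro p hp
    obtain ⟨h₀, h₁, h₂⟩ := mem_kochTriangle.1 hp
    rw [kochF_zero_apply, mem_kochTriangle, pt_apply_zero, pt_apply_one]
    refine ⟨by nlinarith [hl.1], by nlinarith [hl.1], by nlinarith [hl.1, hl.2]⟩
  · intro p hp
    obtain ⟨h₀, -, h₂⟩ := mem_kochTriangle.1 hp
    obtain ⟨hx₀, hx₁⟩ := mem_Icc_of_mem_kochTriangle hl hp
    have hleft : 0 ≤ l * (2 * kochHeight l * (1 - p 0) - p 1) :=
      mul_nonneg (by linarith [hl.1]) (by linarith)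
    have hright : 0 ≤ 2 * kochHeight l * (1 - l) * (1 - p 0) + (3 * l - 1) * p 1 :=
      add_nonneg (mul_nonneg (by nlinarith [hl.2]) (by linarith))
        (mul_nonneg (by linarith [hl.1]) h₀)
    rw [kochF_one_apply hl, mem_kochTriangle, pt_apply_zero, pt_apply_one]
    refine ⟨add_nonneg (mul_nonneg hh.le hx₀) (mul_nonneg (by linarith [hl.2]) h₀), ?_, ?_⟩
    · linear_combination hleft + 2 * p 1 * hsq
    · linear_combination hright - 2 * p 1 * hsq

/-- The point `kochF l i p` lies outside one of the two half-planes that bound `toothWedge l`, by an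
amount that vanishes only when `p 1 = 0`. -/
theorem kochF_leg_le (hl : l ∈ Ico (1 / 3 : ℝ) (1 / 2)) (i : Fin 4) : ∀ p ∈ kochTriangle l,
    kochHeight l * (kochF l i p 0 - l) - (1 / 2 - l) * kochF l i p 1 ≤ -((1 / 2 - l) * l * p 1) ∨
    kochHeight l * (1 - l - kochF l i p 0) - (1 / 2 - l) * kochF l i p 1 ≤
      -((1 / 2 - l) * l * p 1) := by
  have hh := kochHeight_pos hl
  have hsq := kochHeight_sq hl
  refine forall_of_rev ?_ ?_ ?_ i
  · intro p hp
    left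
    have hx := (mem_Icc_of_mem_kochTriangle hl hp).2
    simp only [kochF_zero_apply, pt_apply_zero, pt_apply_one]
    nlinarith [mul_nonneg (mul_nonneg hh.le (by linarith [hl.1] : 0 ≤ l)) (sub_nonneg.2 hx)]
  · intro p hp
    left
    obtain ⟨h₀, -, -⟩ := mem_kochTriangle.1 hp
    simp only [kochF_one_apply hl, pt_apply_zero, pt_apply_one]
    have : 0 ≤ l * (2 * l - 1 / 2) * p 1 := by
      have := hl.1
      exact mul_nonneg (mul_nonneg (by linarith) (by linarith)) h₀
    linear_combination this - p 1 * hsq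
  · intro i hi p hp
    have := hi _ (mapsTo_reflect_kochTriangle hp)
    simp only [kochF_rev_apply hl, reflect_apply_zero, reflect_apply_one] at this ⊢
    refine this.symm.imp (fun h => ?_) (fun h => ?_) <;> linarith

theorem apply_one_eq_zero_of_kochF_mem_toothWedge (hl : l ∈ Ico (1 / 3 : ℝ) (1 / 2)) {i : Fin 4}
    {p : Plane} (hp : p ∈ kochTriangle l) (h : kochF l i p ∈ toothWedge l) : p 1 = 0 := by
  rw [mem_toothWedge] at h
  have hbl : 0 < (1 / 2 - l) * l := mul_pos (by linarith [hl.2]) (by linarith [hl.1])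
  have hp₀ := (mem_kochTriangle.1 hp).1
  rcases kochF_leg_le hl i p hp with hle | hle <;> nlinarith

theorem kochF_notMem_interior_toothWedge (hl : l ∈ Ico (1 / 3 : ℝ) (1 / 2)) {i : Fin 4} {p : Plane}
    (hp : p ∈ kochTriangle l) : kochF l i p ∉ interior (toothWedge l) := by
  intro h
  rw [toothWedge, interior_inter] at h
  have hnorm : 0 < kochHeight l ^ 2 := pow_pos (kochHeight_pos hl) 2
  have h₁ := pos_of_mem_interior_halfPlane (by nlinarith) h.1
  have h₂ := pos_of_mem_interior_halfPlane (by nlinarith) h.2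
  have hbl : 0 < (1 / 2 - l) * l := mul_pos (by linarith [hl.2]) (by linarith [hl.1])
  have hp₀ := (mem_kochTriangle.1 hp).1
  rcases kochF_leg_le hl i p hp with hle | hle <;> nlinarith

end KochTriangles

/-! ### Outer approximations of the von Koch curve -/

section KochStages

variable {l : ℝ} {i j : Fin 4} {p q : Plane}

theorem kochF_apply_zero_le_half (hl : l ∈ Ico (1 / 3 : ℝ) (1 / 2)) (hi : i < 2)
    (hp : p ∈ kochTriangle l) : kochF l i p 0 ≤ 1 / 2 ∧ (kochF l i p 0 = 1 / 2 → p = pt 1 0) := by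
  have hx₁ := (mem_Icc_of_mem_kochTriangle hl hp).2
  have hy := (mem_kochTriangle.1 hp).1
  have hh := kochHeight_pos hl
  have hb : 0 < 1 / 2 - l := sub_pos.2 hl.2
  obtain rfl | rfl : i = 0 ∨ i = 1 := by omega
  · rw [kochF_zero_apply, pt_apply_zero]
    have : l * p 0 < 1 / 2 := by nlinarith [hl.1, hl.2]
    exact ⟨this.le, fun h => absurd h this.ne⟩
  · rw [kochF_one_apply hl, pt_apply_zero]
    have hbx := mul_le_of_le_one_right hb.le hx₁
    have hhy := mul_nonneg hh.le hy
    refine ⟨by linarith, fun h => plane_ext ?_ ?_⟩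
    · exact mul_left_cancel₀ hb.ne' (by rw [pt_apply_zero]; linarith)
    · exact mul_left_cancel₀ hh.ne' (by rw [pt_apply_one]; linarith)

theorem rev_lt_two_of_two_le : ∀ {i : Fin 4}, 2 ≤ i → i.rev < 2 := by
  decide

theorem half_le_kochF_apply_zero (hl : l ∈ Ico (1 / 3 : ℝ) (1 / 2)) (hi : 2 ≤ i)
    (hp : p ∈ kochTriangle l) : 1 / 2 ≤ kochF l i p 0 ∧ (kochF l i p 0 = 1 / 2 → p = pt 0 0) := by
  obtain ⟨hle, heq⟩ := kochF_apply_zero_le_half hl (rev_lt_two_of_two_le hi)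
    (mapsTo_reflect_kochTriangle hp)
  have hrev : kochF l i.rev (reflect p) 0 = 1 - kochF l i p 0 := by
    rw [kochF_rev_apply hl, reflect_reflect, reflect_apply_zero]
  rw [hrev] at hle heq
  refine ⟨by linarith, fun h => ?_⟩
  rw [← reflect_reflect p, heq (by linarith)]
  exact plane_ext (sub_self 1) rfl

/-- The line that carries the right side of `kochF l 0 '' kochTriangle l` separates this triangle
from `kochF l 1 '' kochTriangle l`. -/
theorem eq_of_kochF_zero_eq_kochF_one (hl : l ∈ Ico (1 / 3 : ℝ) (1 / 2)) (hp : p ∈ kochTriangle l)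
    (hq : q ∈ kochTriangle l) (h : kochF l 0 p = kochF l 1 q) : p = pt 1 0 ∧ q = pt 0 0 := by
  obtain ⟨hp₀, -, hp₂⟩ := mem_kochTriangle.1 hp
  obtain ⟨hq₀, hq₁, -⟩ := mem_kochTriangle.1 hq
  have hx := (mem_Icc_of_mem_kochTriangle hl hq).1
  have hh := kochHeight_pos hl
  have hsq := kochHeight_sq hl
  have hl₀ : 0 < l := by linarith [hl.1]
  rw [kochF_zero_apply, kochF_one_apply hl] at h
  have h₀ : l * p 0 = (1 / 2 - l) * q 0 - kochHeight l * q 1 + l := congrArg (· 0) h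
  have h₁ : l * p 1 = kochHeight l * q 0 + (1 / 2 - l) * q 1 := congrArg (· 1) h
  have hleft : l * p 1 - 2 * kochHeight l * (l - l * p 0) ≤ 0 := by nlinarith
  have hright : 4 * (1 - 2 * l) * kochHeight l * q 0 ≤
      l * p 1 - 2 * kochHeight l * (l - l * p 0) := by
    rw [h₀, h₁]
    nlinarith [mul_le_mul_of_nonneg_left hq₁ (by linarith [hl.1] : 0 ≤ 3 * l - 1)]
  have hpos : 0 < 4 * (1 - 2 * l) * kochHeight l := mul_pos (by linarith [hl.2]) hh
  have hq0 : q 0 = 0 := le_antisymm (nonpos_of_mul_nonpos_right (hright.trans hleft) hpos) hx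
  have hq1 : q 1 = 0 := le_antisymm (by simpa only [hq0, mul_zero] using hq₁) hq₀
  rw [hq0, hq1] at h₀ h₁
  refine ⟨plane_ext ?_ ?_, plane_ext hq0 hq1⟩
  · exact mul_left_cancel₀ hl₀.ne' (by rw [h₀, pt_apply_zero]; ring)
  · exact mul_left_cancel₀ hl₀.ne' (by rw [h₁, pt_apply_one]; ring)

theorem mem_kochEndpoints_of_kochF_eq (hl : l ∈ Ico (1 / 3 : ℝ) (1 / 2)) (hij : i ≠ j)
    (hp : p ∈ kochTriangle l) (hq : q ∈ kochTriangle l) (h : kochF l i p = kochF l j q) :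
    p ∈ kochEndpoints := by
  have hx : kochF l i p 0 = kochF l j q 0 := congrArg (· 0) h
  have hsameSide : ∀ {i j : Fin 4} {p q : Plane}, i ≠ j → i < 2 → j < 2 → p ∈ kochTriangle l →
      q ∈ kochTriangle l → kochF l i p = kochF l j q → p ∈ kochEndpoints := by
    intro i j p q hij hi hj hp hq h
    obtain ⟨rfl, rfl⟩ | ⟨rfl, rfl⟩ : i = 0 ∧ j = 1 ∨ i = 1 ∧ j = 0 := by omega
    · exact Or.inr (eq_of_kochF_zero_eq_kochF_one hl hp hq h).1
    · exact Or.inl (eq_of_kochF_zero_eq_kochF_one hl hq hp h.symm).2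
  rcases lt_or_ge i 2 with hi | hi <;> rcases lt_or_ge j 2 with hj | hj
  · exact hsameSide hij hi hj hp hq h
  · have hle := kochF_apply_zero_le_half hl hi hp
    exact Or.inr (hle.2 (le_antisymm hle.1 (hx ▸ (half_le_kochF_apply_zero hl hj hq).1)))
  · have hge := half_le_kochF_apply_zero hl hi hp
    exact Or.inl (hge.2 (le_antisymm (hx ▸ (kochF_apply_zero_le_half hl hj hq).1) hge.1))
  · rw [← reflect_reflect p]
    refine mapsTo_reflect_kochEndpoints (hsameSide (Fin.rev_injective.ne hij)
      (rev_lt_two_of_two_le hi) (rev_lt_two_of_two_le hj) (mapsTo_reflect_kochTriangle hp)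
      (mapsTo_reflect_kochTriangle hq) ?_)
    rw [kochF_rev_apply hl, kochF_rev_apply hl, reflect_reflect, reflect_reflect, h]

theorem tooth_subset_kochTriangle (hl : l ∈ Ico (1 / 3 : ℝ) (1 / 2)) :
    tooth l ⊆ kochTriangle l := by
  intro p hp
  obtain ⟨hp, hp₀⟩ := mem_tooth.1 hp
  obtain ⟨hleft, hright⟩ := mem_toothWedge.1 hp
  have hheight : p 1 ≤ kochHeight l :=
    le_of_mul_le_mul_left (by linarith) (sub_pos.2 hl.2)
  have := mul_le_mul_of_nonneg_left hheight (by linarith [hl.1] : 0 ≤ 2 * l)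
  exact mem_kochTriangle.2 ⟨hp₀, by linarith, by linarith⟩

theorem mem_tooth_of_apply_zero_eq_half (hl : l ∈ Ico (1 / 3 : ℝ) (1 / 2)) (hp : p ∈ kochTriangle l)
    (hx : p 0 = 1 / 2) : p ∈ tooth l := by
  obtain ⟨hp₀, hp₁, -⟩ := mem_kochTriangle.1 hp
  rw [hx] at hp₁
  have := mul_le_mul_of_nonneg_left hp₁ (sub_nonneg.2 hl.2.le)
  rw [mem_tooth, mem_toothWedge, hx]
  exact ⟨⟨by linarith, by linarith⟩, hp₀⟩

/-- The `n`-th outer approximation of the von Koch curve together with the region between the curve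
and the unit segment: the teeth of the first `n` generations and the triangles that contain the
remaining parts of the curve. -/
def kochStage (l : ℝ) : ℕ → Set Plane
  | 0 => kochTriangle l
  | n + 1 => tooth l ∪ ⋃ i, kochF l i '' kochStage l n

theorem kochStage_subset_kochTriangle (hl : l ∈ Ico (1 / 3 : ℝ) (1 / 2)) (n : ℕ) :
    kochStage l n ⊆ kochTriangle l := by
  induction n with
  | zero => exact Subset.rfl
  | succ n ih =>
    refine union_subset (tooth_subset_kochTriangle hl) (iUnion_subset fun i => ?_)
    exact ((mapsTo_kochF_kochTriangle hl i).mono_left ih).image_subset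

theorem isClosed_kochStage (hl : 0 < l) (n : ℕ) : IsClosed (kochStage l n) := by
  induction n with
  | zero => exact isClosed_kochTriangle
  | succ n ih =>
    exact isClosed_tooth.union (isClosed_iUnion_of_finite fun i =>
      (isSimilarity_kochF hl i).isClosed_image ih)

theorem mem_kochStage_of_apply_one_eq_zero (hl : l ∈ Ico (1 / 3 : ℝ) (1 / 2)) (n : ℕ) :
    ∀ p ∈ kochTriangle l, p 1 = 0 → p ∈ kochStage l n := by
  have hh := kochHeight_pos hl
  have hl₀ : 0 < l := by linarith [hl.1]
  induction n with
  | zero => exact fun p hp _ => hp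
  | succ n ih =>
    intro p hp hp₁
    obtain ⟨hx₀, hx₁⟩ := mem_Icc_of_mem_kochTriangle hl hp
    have hsegment : ∀ x ∈ Icc (0 : ℝ) 1, pt x 0 ∈ kochStage l n := fun x hx => by
      refine ih _ (mem_kochTriangle.2 ⟨le_rfl, ?_, ?_⟩) rfl
      · exact mul_nonneg (by linarith) hx.1
      · exact mul_nonneg (by linarith) (sub_nonneg.2 hx.2)
    by_cases hleft : p 0 ≤ l
    · refine Or.inr (mem_iUnion.2 ⟨0, pt (p 0 / l) 0, hsegment _ ⟨by positivity,
        (div_le_one hl₀).2 hleft⟩, ?_⟩)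
      rw [kochF_zero_apply]
      refine plane_ext ?_ ?_
      · simp only [pt_apply_zero]
        field_simp
      · simp only [pt_apply_one, hp₁, mul_zero]
    by_cases hright : 1 - l ≤ p 0
    · refine Or.inr (mem_iUnion.2 ⟨3, pt ((p 0 - (1 - l)) / l) 0, hsegment _
        ⟨div_nonneg (sub_nonneg.2 hright) hl₀.le, (div_le_one hl₀).2 (by linarith)⟩, ?_⟩)
      rw [kochF_three_apply]
      refine plane_ext ?_ ?_
      · simp only [pt_apply_zero]
        field_simp
        ring
      · simp only [pt_apply_one, hp₁, mul_zero]
    · refine Or.inl (mem_tooth.2 ⟨mem_toothWedge.2 ⟨?_, ?_⟩, hp₁.ge⟩) <;> rw [hp₁, mul_zero]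
      · exact mul_nonneg hh.le (by linarith)
      · exact mul_nonneg hh.le (by linarith)

theorem kochEndpoints_subset_kochStage (hl : l ∈ Ico (1 / 3 : ℝ) (1 / 2)) (n : ℕ) :
    kochEndpoints ⊆ kochStage l n := by
  have hh := kochHeight_pos hl
  rintro _ (rfl | rfl) <;> refine mem_kochStage_of_apply_one_eq_zero hl n _ ?_ rfl <;>
    simp only [mem_kochTriangle, pt_apply_zero, pt_apply_one]
  · exact ⟨le_rfl, by linarith, by linarith⟩
  · exact ⟨le_rfl, by linarith, by linarith⟩

theorem mem_kochStage_of_kochF_mem_succ (hl : l ∈ Ico (1 / 3 : ℝ) (1 / 2)) {n : ℕ}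
    (hp : p ∈ kochTriangle l) (h : kochF l i p ∈ kochStage l (n + 1)) : p ∈ kochStage l n := by
  rcases h with h | h
  · exact mem_kochStage_of_apply_one_eq_zero hl n p hp
      (apply_one_eq_zero_of_kochF_mem_toothWedge hl hp h.1)
  · obtain ⟨j, q, hq, hqp⟩ := mem_iUnion.1 h
    rcases eq_or_ne i j with rfl | hij
    · rwa [← (isSimilarity_kochF (by linarith [hl.1]) i).injective hqp]
    · exact kochEndpoints_subset_kochStage hl n (mem_kochEndpoints_of_kochF_eq hl hij hp
        (kochStage_subset_kochTriangle hl n hq) hqp.symm)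

theorem isFull_tooth_union (hl : 0 < l) {e : Plane} {I : Set (Fin 4)} (he : e ∈ tooth l)
    (hI : ∀ i ∈ I, e ∈ kochF l i '' kochTriangle l) :
    IsFull (tooth l ∪ ⋃ i ∈ I, kochF l i '' kochTriangle l) :=
  isFull_of_starConvex ((convex_tooth.starConvex he).union (starConvex_iUnion₂ fun i hi =>
    ((isSimilarity_kochF hl i).convex_image convex_kochTriangle).starConvex (hI i hi)))
    ⟨e, Or.inl he⟩

theorem kochEndpoints_subset_kochTriangle (hl : l ∈ Ico (1 / 3 : ℝ) (1 / 2)) :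
    kochEndpoints ⊆ kochTriangle l :=
  kochEndpoints_subset_kochStage hl 0

theorem isFull_kochTriangle (hl : l ∈ Ico (1 / 3 : ℝ) (1 / 2)) : IsFull (kochTriangle l) :=
  have h₀ : pt 0 0 ∈ kochTriangle l := kochEndpoints_subset_kochTriangle hl (Or.inl rfl)
  isFull_of_starConvex (convex_kochTriangle.starConvex h₀) ⟨_, h₀⟩

theorem isFull_tooth_union_Iio (hl : l ∈ Ico (1 / 3 : ℝ) (1 / 2)) :
    IsFull (tooth l ∪ ⋃ i ∈ Iio 2, kochF l i '' kochTriangle l) := by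
  have hh := kochHeight_pos hl
  have hends := kochEndpoints_subset_kochTriangle hl
  refine isFull_tooth_union (by linarith [hl.1]) (e := pt l 0) ?_ fun i (hi : i < 2) => ?_
  · simp only [mem_tooth, mem_toothWedge, pt_apply_zero, pt_apply_one]
    exact ⟨⟨by linarith, by nlinarith [hl.2]⟩, le_rfl⟩
  obtain rfl | rfl : i = 0 ∨ i = 1 := by omega
  · refine ⟨pt 1 0, hends (Or.inr rfl), ?_⟩
    rw [kochF_zero_apply]
    exact plane_ext (mul_one l) (mul_zero l)
  · refine ⟨pt 0 0, hends (Or.inl rfl), ?_⟩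
    rw [kochF_one_apply hl]
    apply plane_ext <;> simp only [pt_apply_zero, pt_apply_one] <;> ring

theorem isFull_tooth_union_Ici (hl : l ∈ Ico (1 / 3 : ℝ) (1 / 2)) :
    IsFull (tooth l ∪ ⋃ i ∈ Ici 2, kochF l i '' kochTriangle l) := by
  have hh := kochHeight_pos hl
  have hends := kochEndpoints_subset_kochTriangle hl
  refine isFull_tooth_union (by linarith [hl.1]) (e := pt (1 - l) 0) ?_ fun i (hi : 2 ≤ i) => ?_
  · simp only [mem_tooth, mem_toothWedge, pt_apply_zero, pt_apply_one]
    exact ⟨⟨by nlinarith [hl.2], by linarith⟩, le_rfl⟩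
  obtain rfl | rfl : i = 2 ∨ i = 3 := by omega
  · refine ⟨pt 1 0, hends (Or.inr rfl), ?_⟩
    rw [kochF_two_apply hl]
    apply plane_ext <;> simp only [pt_apply_zero, pt_apply_one] <;> ring
  · refine ⟨pt 0 0, hends (Or.inl rfl), ?_⟩
    rw [kochF_three_apply]
    apply plane_ext <;> simp only [pt_apply_zero, pt_apply_one] <;> ring

/-- The left (`s = true`) or right half-plane of the symmetry axis `x = 1/2`. -/
def axisSide (s : Bool) : Set Plane :=
  if s then halfPlane (-1) 0 (1 / 2) else halfPlane 1 0 (-(1 / 2))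

theorem mem_axisSide_true : p ∈ axisSide true ↔ p 0 ≤ 1 / 2 := by
  constructor <;> intro h <;> simp only [axisSide, if_true, mem_halfPlane] at h ⊢ <;> linarith

theorem mem_axisSide_false : p ∈ axisSide false ↔ 1 / 2 ≤ p 0 := by
  constructor <;> intro h <;>
    simp only [axisSide, Bool.false_eq_true, if_false, mem_halfPlane] at h ⊢ <;> linarith

theorem isClosed_axisSide (s : Bool) : IsClosed (axisSide s) := by
  cases s <;> exact isClosed_halfPlane

theorem mem_tooth_of_mem_axisSide (hl : l ∈ Ico (1 / 3 : ℝ) (1 / 2)) {s s' : Bool} (hss' : s ≠ s')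
    (hp : p ∈ kochTriangle l) (hs : p ∈ axisSide s) (hs' : p ∈ axisSide s') : p ∈ tooth l := by
  refine mem_tooth_of_apply_zero_eq_half hl hp ?_
  cases s <;> cases s' <;> simp only [mem_axisSide_true, mem_axisSide_false] at hs hs'
  exacts [absurd rfl hss', le_antisymm hs' hs, le_antisymm hs hs', absurd rfl hss']

theorem kochF_mem_axisSide (hl : l ∈ Ico (1 / 3 : ℝ) (1 / 2)) (hp : p ∈ kochTriangle l) :
    kochF l i p ∈ axisSide (i < 2) := by
  rcases lt_or_ge i 2 with hi | hi
  · rw [decide_eq_true hi, mem_axisSide_true]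
    exact (kochF_apply_zero_le_half hl hi hp).1
  · rw [decide_eq_false hi.not_gt, mem_axisSide_false]
    exact (half_le_kochF_apply_zero hl hi hp).1

/-- The symmetry axis cuts the first stage into two parts, each of which is star-convex. -/
theorem isFull_kochStage_one (hl : l ∈ Ico (1 / 3 : ℝ) (1 / 2)) : IsFull (kochStage l 1) := by
  have hclosed : IsClosed (kochStage l 1) := isClosed_kochStage (by linarith [hl.1]) 1
  refine (isFull_kochTriangle hl).of_pieces (T := fun s => kochTriangle l ∩ axisSide s)
    (A' := fun s => tooth l ∪ ⋃ i ∈ {i | decide (i < 2) = s}, kochF l i '' kochTriangle l)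
    hclosed (kochStage_subset_kochTriangle hl 1) (fun p hp => Or.inr (mem_iUnion.2 ?_))
    (fun s => isClosed_kochTriangle.inter (isClosed_axisSide s))
    (fun s s' hss' p hp => Or.inl (mem_tooth_of_mem_axisSide hl hss' hp.1.1 hp.1.2 hp.2.2))
    ?_ (fun s => union_subset_union_right _ (iUnion₂_subset_iUnion _ _)) ?_
  · rcases le_total (p 0) (1 / 2) with h | h
    exacts [⟨true, hp, mem_axisSide_true.2 h⟩, ⟨false, hp, mem_axisSide_false.2 h⟩]
  · rintro s p ⟨hp | hp, -, hs⟩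
    · exact Or.inl hp
    obtain ⟨i, q, hq : q ∈ kochTriangle l, rfl⟩ := mem_iUnion.1 hp
    by_cases hi : decide (i < 2) = s
    · exact Or.inr (mem_biUnion hi (mem_image_of_mem _ hq))
    · exact Or.inl (mem_tooth_of_mem_axisSide hl hi (mapsTo_kochF_kochTriangle hl i hq)
        (kochF_mem_axisSide hl hq) hs)
  · rintro (_ | _)
    · simpa only [decide_eq_false_iff_not, not_lt, Ici_def] using isFull_tooth_union_Ici hl
    · simpa only [decide_eq_true_iff, Iio_def] using isFull_tooth_union_Iio hl

theorem isFull_kochStage (hl : l ∈ Ico (1 / 3 : ℝ) (1 / 2)) (n : ℕ) : IsFull (kochStage l n) := by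
  have hS : ∀ i, IsSimilarity l (kochF l i) := isSimilarity_kochF (by linarith [hl.1])
  induction n with
  | zero => exact isFull_kochTriangle hl
  | succ n ih =>
    have hsub : ∀ i, kochF l i '' kochStage l n ⊆ kochStage l (n + 1) := fun i =>
      subset_union_of_subset_right (subset_iUnion (fun i => kochF l i '' kochStage l n) i) _
    refine (isFull_kochStage_one hl).of_pieces (T := fun i => kochF l i '' kochTriangle l)
      (A' := fun i => kochF l i '' kochStage l n) (isClosed_kochStage (by linarith [hl.1]) _)
      (union_subset_union_right _ (iUnion_mono fun i =>
        image_mono (kochStage_subset_kochTriangle hl n)))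
      (union_subset_union_left _ subset_union_left)
      (fun i => (hS i).isClosed_image isClosed_kochTriangle) ?_ ?_ hsub
      fun i => ih.image_similarity (hS i)
    · rintro i j hij _ ⟨⟨p, hp, rfl⟩, q, hq, hqp⟩
      exact hsub i (mem_image_of_mem _ (kochEndpoints_subset_kochStage hl n
        (mem_kochEndpoints_of_kochF_eq hl hij hp hq hqp.symm)))
    · rintro i _ ⟨hp, p, hpT, rfl⟩
      exact mem_image_of_mem _ (mem_kochStage_of_kochF_mem_succ hl hpT hp)

end KochStages

/-! ### Stations of John arcs -/

section Stations

variable {l : ℝ}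

/-- The John constant of the snowflake domain with parameter `l`. -/
def johnConst (l : ℝ) : ℝ := (1 / 2 - l) / l

/-- The time at which a John arc reaches `station`: the circumradius of `kochTriangle`. -/
def stationTime (l : ℝ) : ℝ := l / (2 * kochHeight l)

/-- The station of a John arc below the unit segment: the circumcentre of `kochTriangle`, which is
also the incentre of `lowerTriangle`. -/
def station (l : ℝ) : Plane := pt (1 / 2) (kochHeight l - stationTime l)

theorem johnConst_pos (hl : l ∈ Ico (1 / 3 : ℝ) (1 / 2)) : 0 < johnConst l :=
  div_pos (sub_pos.2 hl.2) (by linarith [hl.1])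

theorem johnConst_le_half (hl : l ∈ Ico (1 / 3 : ℝ) (1 / 2)) : johnConst l ≤ 1 / 2 := by
  rw [johnConst, div_le_iff₀ (by linarith [hl.1])]
  linarith [hl.1]

theorem stationTime_pos (hl : l ∈ Ico (1 / 3 : ℝ) (1 / 2)) : 0 < stationTime l :=
  div_pos (by linarith [hl.1]) (mul_pos two_pos (kochHeight_pos hl))

theorem two_mul_kochHeight_mul_stationTime (hl : l ∈ Ico (1 / 3 : ℝ) (1 / 2)) :
    2 * kochHeight l * stationTime l = l :=
  mul_div_cancel₀ l (mul_pos two_pos (kochHeight_pos hl)).ne'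

theorem johnConst_mul_stationTime (hl : l ∈ Ico (1 / 3 : ℝ) (1 / 2)) :
    johnConst l * stationTime l = stationTime l - kochHeight l := by
  have hl₀ : 0 < l := by linarith [hl.1]
  have hh := kochHeight_pos hl
  rw [johnConst, stationTime]
  field_simp
  linear_combination 4 * kochHeight_sq hl

theorem closedBall_station_subset_lowerTriangle (hl : l ∈ Ico (1 / 3 : ℝ) (1 / 2)) :
    closedBall (station l) (johnConst l * stationTime l) ⊆ lowerTriangle l := by
  have hsq := kochHeight_sq hl
  have hnorm : (2 * kochHeight l * (1 / 2 - l)) ^ 2 +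
      (kochHeight l ^ 2 - (1 / 2 - l) ^ 2) ^ 2 = (l ^ 2) ^ 2 := by
    linear_combination (kochHeight l ^ 2 + (1 / 2 - l) ^ 2 + l ^ 2) * hsq
  have hdist : l ^ 2 * (stationTime l - kochHeight l) = 2 * kochHeight l * (1 / 2 - l) * (1 / 2) +
      (kochHeight l ^ 2 - (1 / 2 - l) ^ 2) * (kochHeight l - stationTime l) := by
    linear_combination kochHeight l * two_mul_kochHeight_mul_stationTime hl -
      (stationTime l + kochHeight l) * hsq
  rw [johnConst_mul_stationTime hl]
  refine subset_inter (subset_inter ?_ ?_) ?_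
  · exact closedBall_subset_halfPlane (sq_nonneg l) hnorm (hdist.trans (add_zero _).symm).le
  · refine closedBall_subset_halfPlane (sq_nonneg l) (by rwa [neg_sq]) ?_
    simp only [station, pt_apply_zero, pt_apply_one]
    linarith
  · refine closedBall_subset_halfPlane zero_le_one (by norm_num) ?_
    simp only [station, pt_apply_zero, pt_apply_one]
    linarith

theorem closedBall_station_subset_toothWedge (hl : l ∈ Ico (1 / 3 : ℝ) (1 / 2)) :
    closedBall (station l) (johnConst l * stationTime l) ⊆ toothWedge l := by
  have hsq := kochHeight_sq hl
  have hl₀ : 0 ≤ l := by linarith [hl.1]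
  have hnorm : kochHeight l ^ 2 + (-(1 / 2 - l)) ^ 2 = l ^ 2 := by linear_combination hsq
  have hdist : l * (stationTime l - kochHeight l) = kochHeight l * (1 / 2)
      + -(1 / 2 - l) * (kochHeight l - stationTime l) + -(kochHeight l * l) := by
    linear_combination kochHeight l * two_mul_kochHeight_mul_stationTime hl -
      2 * stationTime l * hsq
  rw [johnConst_mul_stationTime hl]
  refine subset_inter ?_ ?_
  · exact closedBall_subset_halfPlane hl₀ hnorm hdist.le
  · refine closedBall_subset_halfPlane hl₀ (by rwa [neg_sq (kochHeight l)]) ?_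
    simp only [station, pt_apply_zero, pt_apply_one]
    linarith

theorem mapsTo_kochF_zero_lowerTriangle (hl : l ∈ Ico (1 / 3 : ℝ) (1 / 2)) :
    MapsTo (kochF l 0) (lowerTriangle l) (lowerTriangle l) := by
  have hl₀ : 0 ≤ l := by linarith [hl.1]
  have hh := kochHeight_pos hl
  have hbh : 0 ≤ 2 * kochHeight l * (1 / 2 - l) := mul_nonneg (by linarith) (by linarith [hl.2])
  intro p hp
  simp only [kochF_zero_apply, mem_lowerTriangle, mem_lowerWedge, pt_apply_zero,
    pt_apply_one] at hp ⊢
  obtain ⟨⟨h₁, h₂⟩, h₀⟩ := hp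
  refine ⟨⟨?_, ?_⟩, mul_nonpos_of_nonneg_of_nonpos hl₀ h₀⟩
  · linear_combination mul_nonneg hl₀ h₁
  · linear_combination mul_nonneg hl₀ h₂ + mul_nonneg hbh (by linarith [hl.2] : 0 ≤ 1 - l)

/-- The apex angle of `tooth` is at most `π / 3`; this is equivalent to `1 / 3 ≤ l`. -/
theorem three_mul_sq_le_kochHeight_sq (hl : l ∈ Ico (1 / 3 : ℝ) (1 / 2)) :
    3 * (1 / 2 - l) ^ 2 ≤ kochHeight l ^ 2 := by
  rw [kochHeight_sq hl]
  nlinarith [mul_nonneg (sub_nonneg.2 hl.1) (by linarith [hl.2] : 0 ≤ 1 - l)]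

theorem mapsTo_kochF_one_lowerTriangle (hl : l ∈ Ico (1 / 3 : ℝ) (1 / 2)) :
    MapsTo (kochF l 1) (lowerTriangle l) (tooth l) := by
  have hsq := kochHeight_sq hl
  intro p hp
  simp only [kochF_one_apply hl, mem_lowerTriangle, mem_lowerWedge, mem_tooth, mem_toothWedge,
    pt_apply_zero, pt_apply_one] at hp ⊢
  obtain ⟨⟨h₁, h₂⟩, h₀⟩ := hp
  refine ⟨⟨?_, ?_⟩, ?_⟩
  · linear_combination mul_nonpos_of_nonneg_of_nonpos (sq_nonneg l) h₀ + p 1 * hsq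
  · linear_combination h₂
  · have := mul_nonneg_of_nonpos_of_nonpos (sub_nonpos.2 (three_mul_sq_le_kochHeight_sq hl)) h₀
    have hb : 0 < 2 * (1 / 2 - l) := by linarith [hl.2]
    refine nonneg_of_mul_nonneg_right ?_ hb
    linear_combination this + h₁

theorem mapsTo_kochF_tooth_or_lowerTriangle (hl : l ∈ Ico (1 / 3 : ℝ) (1 / 2)) (i : Fin 4) :
    MapsTo (kochF l i) (lowerTriangle l) (tooth l) ∨
      MapsTo (kochF l i) (lowerTriangle l) (lowerTriangle l) :=
  forall_of_rev (Or.inr (mapsTo_kochF_zero_lowerTriangle hl))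
    (Or.inl (mapsTo_kochF_one_lowerTriangle hl))
    (fun _ hi => hi.imp (mapsTo_kochF_rev hl mapsTo_reflect_lowerTriangle mapsTo_reflect_tooth)
      (mapsTo_kochF_rev hl mapsTo_reflect_lowerTriangle mapsTo_reflect_lowerTriangle)) i

theorem tooth_subset_lowerWedge (hl : l ∈ Ico (1 / 3 : ℝ) (1 / 2)) : tooth l ⊆ lowerWedge l := by
  have hh := kochHeight_pos hl
  have hsq := kochHeight_sq hl
  have hbh : 0 ≤ 2 * kochHeight l * (1 / 2 - l) := mul_nonneg (by linarith) (by linarith [hl.2])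
  have hhb : 0 ≤ kochHeight l ^ 2 - (1 / 2 - l) ^ 2 := by nlinarith [hl.1, hl.2]
  intro p hp
  obtain ⟨hx₀, hx₁⟩ := mem_Icc_of_mem_kochTriangle hl (tooth_subset_kochTriangle hl hp)
  have hp₁ := (mem_tooth.1 hp).2
  rw [mem_lowerWedge]
  exact ⟨add_nonneg (mul_nonneg hbh hx₀) (mul_nonneg hhb hp₁),
    add_nonneg (mul_nonneg hbh (sub_nonneg.2 hx₁)) (mul_nonneg hhb hp₁)⟩

theorem kochF_one_station (hl : l ∈ Ico (1 / 3 : ℝ) (1 / 2)) :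
    kochF l 1 (station l) = pt (1 / 2) (kochHeight l - l * stationTime l) := by
  have hsq := kochHeight_sq hl
  have htime := two_mul_kochHeight_mul_stationTime hl
  rw [kochF_one_apply hl, station]
  apply plane_ext <;> simp only [pt_apply_zero, pt_apply_one]
  · linear_combination 1 / 2 * htime - hsq
  · linear_combination kochHeight l * htime - 2 * stationTime l * hsq

/-- The station of a leg is the circumcentre of the tooth. -/
theorem dist_kochF_one_station_le (hl : l ∈ Ico (1 / 3 : ℝ) (1 / 2)) {p : Plane}
    (hp : p ∈ tooth l) : dist p (kochF l 1 (station l)) ≤ l * stationTime l := by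
  have hh := kochHeight_pos hl
  have hl₀ : 0 < l := by linarith [hl.1]
  obtain ⟨hw, hp₀⟩ := mem_tooth.1 hp
  obtain ⟨h₁, h₂⟩ := mem_toothWedge.1 hw
  have hwidth : (kochHeight l * (p 0 - 1 / 2)) ^ 2 ≤ ((1 / 2 - l) * (kochHeight l - p 1)) ^ 2 :=
    sq_le_sq' (by linarith) (by linarith)
  have hheight : p 1 ≤ kochHeight l := le_of_mul_le_mul_left (by linarith) (sub_pos.2 hl.2)
  have hchord : kochHeight l ^ 2 * ((p 0 - 1 / 2) ^ 2 + (kochHeight l - p 1) ^ 2) ≤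
      kochHeight l ^ 2 * (2 * (l * stationTime l) * (kochHeight l - p 1)) := by
    have := mul_nonneg (mul_nonneg (sq_nonneg l) (sub_nonneg.2 hheight)) hp₀
    linear_combination hwidth + this + (kochHeight l - p 1) ^ 2 * kochHeight_sq hl
      - l * kochHeight l * (kochHeight l - p 1) * two_mul_kochHeight_mul_stationTime hl
  refine dist_plane_le (mul_pos hl₀ (stationTime_pos hl)).le ?_
  rw [kochF_one_station hl, pt_apply_zero, pt_apply_one]
  linear_combination le_of_mul_le_mul_left hchord (pow_pos hh 2)

theorem reflect_station : reflect (station l) = station l :=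
  plane_ext (sub_half 1) rfl

theorem dist_kochF_station_le (hl : l ∈ Ico (1 / 3 : ℝ) (1 / 2)) (i : Fin 4) :
    dist (kochF l i (station l)) (station l) ≤ stationTime l - l * stationTime l := by
  have htime : 0 ≤ stationTime l - l * stationTime l := by
    nlinarith [stationTime_pos hl, hl.2]
  refine forall_of_rev ?_ ?_ (fun i hi => ?_) i
  · refine dist_plane_le htime (le_of_eq ?_)
    simp only [kochF_zero_apply, station, pt_apply_zero, pt_apply_one]
    linear_combination (1 - l) ^ 2 *
      (kochHeight_sq hl - two_mul_kochHeight_mul_stationTime hl)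
  · refine dist_plane_le htime (le_of_eq ?_)
    rw [kochF_one_station hl, station, pt_apply_zero, pt_apply_zero, pt_apply_one, pt_apply_one]
    ring
  · rwa [kochF_rev_apply hl, reflect_station, ← reflect_station, dist_reflect, reflect_station]

end Stations

/-! ### The snowflake and its outer approximations -/

section Snowflake

variable {l : ℝ} {i j k : Fin 3} {p q : Plane}

theorem cos_two_mul_pi_div_three : Real.cos (2 * Real.pi / 3) = -(1 / 2) := by
  rw [show 2 * Real.pi / 3 = Real.pi - Real.pi / 3 by ring, Real.cos_pi_sub, Real.cos_pi_div_three]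

theorem sin_two_mul_pi_div_three : Real.sin (2 * Real.pi / 3) = √3 / 2 := by
  rw [show 2 * Real.pi / 3 = Real.pi - Real.pi / 3 by ring, Real.sin_pi_sub, Real.sin_pi_div_three]

theorem kochG_one_apply : kochG 1 p =
    pt (-(1 / 2) * p 0 + √3 / 2 * p 1 + 1) (-(√3 / 2) * p 0 - 1 / 2 * p 1) := by
  apply plane_ext
  all_goals
    simp only [kochG, rot, Matrix.cons_val_one, Matrix.cons_val_zero, Real.cos_neg, Real.sin_neg,
      cos_two_mul_pi_div_three, sin_two_mul_pi_div_three, PiLp.add_apply, pt_apply_zero,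
      pt_apply_one]
    ring

theorem kochG_two_apply : kochG 2 p =
    pt (-(1 / 2) * p 0 - √3 / 2 * p 1 + 1 / 2) (√3 / 2 * p 0 - 1 / 2 * p 1 - √3 / 2) := by
  apply plane_ext <;>
    simp only [kochG, rot, Matrix.cons_val, cos_two_mul_pi_div_three, sin_two_mul_pi_div_three,
      PiLp.add_apply, pt_apply_zero, pt_apply_one]
  ring

theorem isSimilarity_kochG (i : Fin 3) : IsSimilarity 1 (kochG i) := by
  have hrot := isSimilarity_rot_smul_add one_pos
  simp only [one_smul] at hrot
  fin_cases i
  · simpa only [one_smul, add_zero] using! isSimilarity_smul_add one_pos (0 : Plane)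
  · exact hrot _ _
  · exact hrot _ _

/-- Twice the signed distances to the side lines of the equilateral triangle on which the snowflake
is built, positive inside, numbered such that `kochG` acts by cyclic shifts. -/
def triangleSide : Fin 3 → Plane → ℝ :=
  ![fun p => -2 * p 1, fun p => √3 * p 0 + p 1, fun p => √3 * (1 - p 0) + p 1]

theorem triangleSide_zero (p : Plane) : triangleSide 0 p = -2 * p 1 := rfl

theorem triangleSide_one (p : Plane) : triangleSide 1 p = √3 * p 0 + p 1 := rfl

theorem triangleSide_two (p : Plane) : triangleSide 2 p = √3 * (1 - p 0) + p 1 := rfl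

theorem triangleSide_kochG (k i : Fin 3) (p : Plane) :
    triangleSide k (kochG i p) = triangleSide (k + i) p := by
  have hsq : √3 ^ 2 = 3 := Real.sq_sqrt zero_le_three
  obtain rfl | rfl | rfl : i = 0 ∨ i = 1 ∨ i = 2 := by omega
  · rw [add_zero]
    rfl
  all_goals
    obtain rfl | rfl | rfl : k = 0 ∨ k = 1 ∨ k = 2 := by omega
    all_goals
      simp only [kochG_one_apply, kochG_two_apply, triangleSide, Fin.reduceAdd, Matrix.cons_val,
        pt_apply_zero, pt_apply_one]
      grind

/-- The equilateral triangle on which the snowflake is built. -/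
def baseTriangle : Set Plane :=
  halfPlane 0 (-2) 0 ∩ halfPlane √3 1 0 ∩ halfPlane (-√3) 1 √3

theorem mem_baseTriangle : p ∈ baseTriangle ↔ ∀ k, 0 ≤ triangleSide k p := by
  simp only [baseTriangle, mem_inter_iff, mem_halfPlane, and_assoc]
  constructor
  · rintro ⟨h₀, h₁, h₂⟩ k
    obtain rfl | rfl | rfl : k = 0 ∨ k = 1 ∨ k = 2 := by omega
    · linarith [triangleSide_zero p]
    · linarith [triangleSide_one p]
    · linarith [triangleSide_two p]
  · intro h
    exact ⟨by linarith [h 0, triangleSide_zero p], by linarith [h 1, triangleSide_one p],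
      by linarith [h 2, triangleSide_two p]⟩

theorem isClosed_baseTriangle : IsClosed baseTriangle :=
  (isClosed_halfPlane.inter isClosed_halfPlane).inter isClosed_halfPlane

theorem convex_baseTriangle : Convex ℝ baseTriangle :=
  (convex_halfPlane.inter convex_halfPlane).inter convex_halfPlane

theorem mapsTo_kochG_baseTriangle (i : Fin 3) : MapsTo (kochG i) baseTriangle baseTriangle :=
  fun p hp => mem_baseTriangle.2 fun k => by
    rw [triangleSide_kochG]
    exact mem_baseTriangle.1 hp _

theorem triangleSide_pos_of_mem_interior (hp : p ∈ interior baseTriangle) (k : Fin 3) :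
    0 < triangleSide k p := by
  have hsq : √3 ^ 2 = 3 := Real.sq_sqrt zero_le_three
  rw [baseTriangle, interior_inter, interior_inter] at hp
  obtain rfl | rfl | rfl : k = 0 ∨ k = 1 ∨ k = 2 := by omega
  · have := pos_of_mem_interior_halfPlane (by norm_num) hp.1.1
    linarith [triangleSide_zero p]
  · have := pos_of_mem_interior_halfPlane (by positivity) hp.1.2
    linarith [triangleSide_one p]
  · have := pos_of_mem_interior_halfPlane (by positivity) hp.2
    linarith [triangleSide_two p]

/-- The centre of the snowflake. -/
def snowflakeCenter : Plane := pt (1 / 2) (-(√3 / 6))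

theorem kochG_snowflakeCenter (i : Fin 3) : kochG i snowflakeCenter = snowflakeCenter := by
  have hsq : √3 ^ 2 = 3 := Real.sq_sqrt zero_le_three
  obtain rfl | rfl | rfl : i = 0 ∨ i = 1 ∨ i = 2 := by omega
  · rfl
  · rw [kochG_one_apply]
    apply plane_ext <;> simp only [snowflakeCenter, pt_apply_zero, pt_apply_one] <;> grind
  · rw [kochG_two_apply]
    apply plane_ext <;> simp only [snowflakeCenter, pt_apply_zero, pt_apply_one] <;> grind

theorem closedBall_snowflakeCenter_subset :
    closedBall snowflakeCenter (√3 / 6) ⊆ baseTriangle := by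
  have hsq : √3 ^ 2 = 3 := Real.sq_sqrt zero_le_three
  refine subset_inter (subset_inter ?_ ?_) ?_ <;>
    refine closedBall_subset_halfPlane zero_le_two (by linarith) ?_ <;>
      rw [snowflakeCenter, pt_apply_zero, pt_apply_one] <;> linarith

theorem snowflakeCenter_mem_baseTriangle : snowflakeCenter ∈ baseTriangle :=
  closedBall_snowflakeCenter_subset (mem_closedBall_self (by positivity))

theorem dist_snowflakeCenter_le (hp : p ∈ baseTriangle) : dist p snowflakeCenter ≤ √3 / 3 := by
  have hsq : √3 ^ 2 = 3 := Real.sq_sqrt zero_le_three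
  have hside := mem_baseTriangle.1 hp
  have hprod : ∀ i j, 0 ≤ triangleSide i p * triangleSide j p :=
    fun i j => mul_nonneg (hside i) (hside j)
  have h₀₁ := hprod 0 1
  have h₀₂ := hprod 0 2
  have h₁₂ := hprod 1 2
  rw [triangleSide_zero, triangleSide_one] at h₀₁
  rw [triangleSide_zero, triangleSide_two] at h₀₂
  rw [triangleSide_one, triangleSide_two] at h₁₂
  refine dist_plane_le (by positivity) ?_
  simp only [snowflakeCenter, pt_apply_zero, pt_apply_one]
  linear_combination (h₀₁ + h₀₂ + h₁₂) / 3 + (p 0 - p 0 ^ 2 - 1 / 4) / 3 * hsq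

theorem triangleSide_zero_le (hl : l ∈ Ico (1 / 3 : ℝ) (1 / 2)) (hp : p ∈ kochTriangle l)
    (k : Fin 3) : triangleSide 0 p ≤ triangleSide k p ∧
      (k ≠ 0 → triangleSide k p ≤ triangleSide 0 p → p ∈ kochEndpoints) := by
  obtain ⟨hx₀, hx₁⟩ := mem_Icc_of_mem_kochTriangle hl hp
  have hy := (mem_kochTriangle.1 hp).1
  have h3 : 0 < √3 := Real.sqrt_pos.2 zero_lt_three
  have hleft := mul_nonneg h3.le hx₀
  have hright := mul_nonneg h3.le (sub_nonneg.2 hx₁)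
  obtain rfl | rfl | rfl : k = 0 ∨ k = 1 ∨ k = 2 := by omega
  · exact ⟨le_rfl, fun h => absurd rfl h⟩
  · rw [triangleSide_zero, triangleSide_one]
    refine ⟨by linarith, fun _ h => Or.inl (plane_ext ?_ (by rw [pt_apply_one]; linarith))⟩
    exact mul_left_cancel₀ h3.ne' (by rw [pt_apply_zero]; linarith)
  · rw [triangleSide_zero, triangleSide_two]
    refine ⟨by linarith, fun _ h => Or.inr (plane_ext ?_ (by rw [pt_apply_one]; linarith))⟩
    exact mul_left_cancel₀ h3.ne' (by rw [pt_apply_zero]; linarith)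

theorem mem_kochEndpoints_of_kochG_eq (hl : l ∈ Ico (1 / 3 : ℝ) (1 / 2)) (hij : i ≠ j)
    (hp : p ∈ kochTriangle l) (hq : q ∈ kochTriangle l) (h : kochG i p = kochG j q) :
    p ∈ kochEndpoints := by
  have hsides : ∀ k, triangleSide (k + i) p = triangleSide (k + j) q := fun k => by
    rw [← triangleSide_kochG, ← triangleSide_kochG, h]
  refine (triangleSide_zero_le hl hp (-j + i)).2 (by grind) ?_
  calc triangleSide (-j + i) p = triangleSide 0 q := by rw [hsides, neg_add_cancel]
    _ ≤ triangleSide (-i + j) q := (triangleSide_zero_le hl hq _).1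
    _ = triangleSide 0 p := by rw [← hsides, neg_add_cancel]

/-- The outer approximation of the filled snowflake by `kochStage l n`. -/
def snowflakeStage (l : ℝ) (n : ℕ) : Set Plane := baseTriangle ∪ ⋃ i, kochG i '' kochStage l n

theorem segment_snowflakeCenter_subset (hl : l ∈ Ico (1 / 3 : ℝ) (1 / 2))
    (hp : p ∈ kochTriangle l) :
    segment ℝ snowflakeCenter p ⊆ kochTriangle l ∪ baseTriangle := by
  let kite : Set Plane :=
    halfPlane (2 * kochHeight l) (-1) 0 ∩ halfPlane (-(2 * kochHeight l)) (-1) (2 * kochHeight l) ∩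
      (halfPlane √3 3 0 ∩ halfPlane (-√3) 3 √3)
  have hkite : Convex ℝ kite := (convex_halfPlane.inter convex_halfPlane).inter
    (convex_halfPlane.inter convex_halfPlane)
  have hcenter : snowflakeCenter ∈ kite := by
    have hh := kochHeight_pos hl
    have h3 := Real.sqrt_nonneg 3
    simp only [kite, mem_inter_iff, mem_halfPlane, snowflakeCenter, pt_apply_zero, pt_apply_one]
    refine ⟨⟨?_, ?_⟩, ?_, ?_⟩ <;> linarith
  have hpkite : p ∈ kite := by
    obtain ⟨hx₀, hx₁⟩ := mem_Icc_of_mem_kochTriangle hl hp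
    obtain ⟨hy, hleft, hright⟩ := mem_kochTriangle.1 hp
    simp only [kite, mem_inter_iff, mem_halfPlane]
    have hside := mul_nonneg (Real.sqrt_nonneg 3) (sub_nonneg.2 hx₁)
    exact ⟨⟨by linarith, by linarith⟩, by positivity, by linarith⟩
  intro q hq
  obtain ⟨⟨hleft, hright⟩, hside₁, hside₂⟩ := hkite.segment_subset hcenter hpkite hq
  rw [mem_halfPlane] at hleft hright hside₁ hside₂
  rcases le_or_gt 0 (q 1) with hy | hy
  · exact Or.inl (mem_kochTriangle.2 ⟨hy, by linarith, by linarith⟩)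
  · exact Or.inr ⟨⟨mem_halfPlane.2 (by linarith), mem_halfPlane.2 (by linarith)⟩,
      mem_halfPlane.2 (by linarith)⟩

theorem starConvex_kochTriangle_union_baseTriangle (hl : l ∈ Ico (1 / 3 : ℝ) (1 / 2)) :
    StarConvex ℝ snowflakeCenter (kochTriangle l ∪ baseTriangle) := by
  rw [starConvex_iff_segment_subset]
  rintro p (hp | hp)
  · exact segment_snowflakeCenter_subset hl hp
  · exact (convex_baseTriangle.segment_subset snowflakeCenter_mem_baseTriangle hp).trans
      subset_union_right

theorem isFull_snowflakeStage_zero (hl : l ∈ Ico (1 / 3 : ℝ) (1 / 2)) :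
    IsFull (snowflakeStage l 0) := by
  have hstar : ∀ i, StarConvex ℝ snowflakeCenter (kochG i '' (kochTriangle l ∪ baseTriangle)) :=
    fun i => by
      have := (isSimilarity_kochG i).starConvex_image
        (starConvex_kochTriangle_union_baseTriangle hl)
      rwa [kochG_snowflakeCenter] at this
  have hstage : snowflakeStage l 0 =
      baseTriangle ∪ ⋃ i, kochG i '' (kochTriangle l ∪ baseTriangle) := by
    refine Subset.antisymm (union_subset_union_right _ (iUnion_mono fun i =>
      image_mono subset_union_left)) (union_subset subset_union_left (iUnion_subset fun i => ?_))
    rw [image_union]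
    exact union_subset (subset_union_of_subset_right (subset_iUnion (fun i =>
      kochG i '' kochTriangle l) i) _) (subset_union_of_subset_left
        (mapsTo_kochG_baseTriangle i).image_subset _)
  rw [hstage]
  have hbase := convex_baseTriangle.starConvex snowflakeCenter_mem_baseTriangle
  exact isFull_of_starConvex (hbase.union (starConvex_iUnion hstar))
    ⟨_, Or.inl snowflakeCenter_mem_baseTriangle⟩

theorem apply_one_nonpos_of_kochG_mem_baseTriangle (h : kochG i p ∈ baseTriangle) : p 1 ≤ 0 := by
  have := mem_baseTriangle.1 h (-i)
  rw [triangleSide_kochG, neg_add_cancel, triangleSide_zero] at this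
  linarith

theorem isFull_snowflakeStage (hl : l ∈ Ico (1 / 3 : ℝ) (1 / 2)) (n : ℕ) :
    IsFull (snowflakeStage l n) := by
  have hsub : ∀ i, kochG i '' kochStage l n ⊆ snowflakeStage l n := fun i =>
    subset_union_of_subset_right (subset_iUnion (fun i => kochG i '' kochStage l n) i) _
  have hclosed : ∀ i, IsClosed (kochG i '' kochStage l n) := fun i =>
    (isSimilarity_kochG i).isClosed_image (isClosed_kochStage (by linarith [hl.1]) n)
  refine (isFull_snowflakeStage_zero hl).of_pieces (T := fun i => kochG i '' kochTriangle l)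
    (A' := fun i => kochG i '' kochStage l n)
    (isClosed_baseTriangle.union (isClosed_iUnion_of_finite hclosed))
    (union_subset_union_right _ (iUnion_mono fun i =>
      image_mono (kochStage_subset_kochTriangle hl n)))
    (union_subset_union_left _ subset_union_left)
    (fun i => (isSimilarity_kochG i).isClosed_image isClosed_kochTriangle) ?_ ?_ hsub
    fun i => (isFull_kochStage hl n).image_similarity (isSimilarity_kochG i)
  · rintro i j hij _ ⟨⟨p, hp, rfl⟩, q, hq, hqp⟩
    exact hsub i (mem_image_of_mem _ (kochEndpoints_subset_kochStage hl n
      (mem_kochEndpoints_of_kochG_eq hl hij hp hq hqp.symm)))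
  · rintro i _ ⟨hp | hp, p, hpT, rfl⟩ <;> refine mem_image_of_mem _ ?_
    · exact mem_kochStage_of_apply_one_eq_zero hl n p hpT
        ((apply_one_nonpos_of_kochG_mem_baseTriangle hp).antisymm (mem_kochTriangle.1 hpT).1)
    · obtain ⟨j, q, hq, hqp⟩ := mem_iUnion.1 hp
      rcases eq_or_ne i j with rfl | hij
      · rwa [← (isSimilarity_kochG i).injective hqp]
      · exact kochEndpoints_subset_kochStage hl n (mem_kochEndpoints_of_kochG_eq hl hij hpT
          (kochStage_subset_kochTriangle hl n hq) hqp.symm)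

theorem sqrt_three_mul_le_kochHeight (hl : l ∈ Ico (1 / 3 : ℝ) (1 / 2)) :
    √3 * (1 / 2 - l) ≤ kochHeight l := by
  refine le_of_sq_le_sq ?_ (kochHeight_pos hl).le
  rw [mul_pow, Real.sq_sqrt zero_le_three]
  exact three_mul_sq_le_kochHeight_sq hl

theorem lowerTriangle_subset_baseTriangle (hl : l ∈ Ico (1 / 3 : ℝ) (1 / 2)) :
    lowerTriangle l ⊆ baseTriangle := by
  have hsq : √3 ^ 2 = 3 := Real.sq_sqrt zero_le_three
  have hh := kochHeight_pos hl
  have hb : 0 < 1 / 2 - l := sub_pos.2 hl.2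
  -- the base angle of `lowerTriangle` is at most `π / 3`
  have hangle : 2 * kochHeight l * (1 / 2 - l) ≤
      √3 * (kochHeight l ^ 2 - (1 / 2 - l) ^ 2) := by
    have : 0 ≤ (kochHeight l - √3 * (1 / 2 - l)) * (√3 * kochHeight l + (1 / 2 - l)) :=
      mul_nonneg (sub_nonneg.2 (sqrt_three_mul_le_kochHeight hl)) (by positivity)
    linear_combination this - kochHeight l * (1 / 2 - l) * hsq
  intro p hp
  obtain ⟨hw, hy⟩ := mem_lowerTriangle.1 hp
  obtain ⟨hleft, hright⟩ := mem_lowerWedge.1 hw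
  have hwidth : 0 < 2 * kochHeight l * (1 / 2 - l) := by positivity
  have := mul_le_mul_of_nonpos_right hangle hy
  refine ⟨⟨mem_halfPlane.2 (by linarith), mem_halfPlane.2 ?_⟩, mem_halfPlane.2 ?_⟩
  · refine nonneg_of_mul_nonneg_right (a := 2 * kochHeight l * (1 / 2 - l)) ?_ hwidth
    linarith [mul_nonneg (Real.sqrt_nonneg 3) hleft]
  · refine nonneg_of_mul_nonneg_right (a := 2 * kochHeight l * (1 / 2 - l)) ?_ hwidth
    linarith [mul_nonneg (Real.sqrt_nonneg 3) hright]

end Snowflake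

/-! ### The curve and its cells -/

section KochCurve

variable {l : ℝ} {K : Set Plane} {i : Fin 4} {p q : Plane}

/-- `K` is the von Koch curve with parameter `l`, characterised as the nonempty compact set that is
invariant under the iterated function system `kochF l`. -/
structure IsKochCurve (l : ℝ) (K : Set Plane) : Prop where
  isCompact : IsCompact K
  nonempty : K.Nonempty
  eq_iUnion : K = ⋃ i, kochF l i '' K

theorem iUnion_kochF_image (l : ℝ) (K : Set Plane) : ⋃ i, kochF l i '' K =
    kochF l 0 '' K ∪ kochF l 1 '' K ∪ kochF l 2 '' K ∪ kochF l 3 '' K := by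
  ext p
  simp only [mem_iUnion, mem_union, Fin.exists_fin_succ, IsEmpty.exists_iff, or_false, or_assoc]
  rfl

theorem IsKochCurve.mapsTo_kochF (hK : IsKochCurve l K) (i : Fin 4) : MapsTo (kochF l i) K K :=
  fun p hp => by
    rw [hK.eq_iUnion]
    exact mem_iUnion.2 ⟨i, mem_image_of_mem _ hp⟩

theorem IsKochCurve.exists_kochF_eq (hK : IsKochCurve l K) (hp : p ∈ K) :
    ∃ i, ∃ q ∈ K, kochF l i q = p :=
  mem_iUnion.1 (hK.eq_iUnion ▸ hp)

theorem IsKochCurve.subset_kochTriangle (hl : l ∈ Ico (1 / 3 : ℝ) (1 / 2)) (hK : IsKochCurve l K) :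
    K ⊆ kochTriangle l :=
  have hl₀ : 0 < l := by linarith [hl.1]
  subset_of_isCompact_of_subset_iUnion_image hK.isCompact hK.eq_iUnion.subset hl₀
    (by linarith [hl.2]) (fun i p q => ((isSimilarity_kochF hl₀ i).dist_map p q).le)
    isClosed_kochTriangle ⟨_, kochEndpoints_subset_kochTriangle hl (Or.inl rfl)⟩
    (mapsTo_kochF_kochTriangle hl)

theorem IsKochCurve.subset_kochStage (hl : l ∈ Ico (1 / 3 : ℝ) (1 / 2)) (hK : IsKochCurve l K)
    (n : ℕ) : K ⊆ kochStage l n := by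
  induction n with
  | zero => exact hK.subset_kochTriangle hl
  | succ n ih =>
    intro p hp
    obtain ⟨i, q, hq, rfl⟩ := hK.exists_kochF_eq hp
    exact Or.inr (mem_iUnion.2 ⟨i, mem_image_of_mem _ (ih hq)⟩)

theorem IsKochCurve.kochEndpoints_subset (hl : l ∈ Ico (1 / 3 : ℝ) (1 / 2))
    (hK : IsKochCurve l K) : kochEndpoints ⊆ K := by
  have hfixed : ∀ i e, kochF l i e = e → e ∈ K := fun i e he =>
    mem_of_isCompact_of_isFixedPt hK.isCompact hK.nonempty (hK.mapsTo_kochF i) (r := l)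
      (by linarith [hl.2])
      (fun p q => ((isSimilarity_kochF (by linarith [hl.1]) i).dist_map p q).le) he
  rintro _ (rfl | rfl)
  · refine hfixed 0 _ ?_
    rw [kochF_zero_apply]
    exact plane_ext (mul_zero l) (mul_zero l)
  · refine hfixed 3 _ ?_
    rw [kochF_three_apply]
    apply plane_ext <;> simp only [pt_apply_zero, pt_apply_one] <;> ring

theorem IsKochCurve.mem_of_kochF_mem (hl : l ∈ Ico (1 / 3 : ℝ) (1 / 2)) (hK : IsKochCurve l K)
    (hp : p ∈ kochTriangle l) (h : kochF l i p ∈ K) : p ∈ K := by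
  obtain ⟨j, q, hq, hqp⟩ := hK.exists_kochF_eq h
  rcases eq_or_ne i j with rfl | hij
  · rwa [← (isSimilarity_kochF (by linarith [hl.1]) i).injective hqp]
  · exact hK.kochEndpoints_subset hl
      (mem_kochEndpoints_of_kochF_eq hl hij hp (hK.subset_kochTriangle hl hq) hqp.symm)

theorem IsKochCurve.notMem_of_mem_interior_toothWedge (hl : l ∈ Ico (1 / 3 : ℝ) (1 / 2))
    (hK : IsKochCurve l K) (hp : p ∈ interior (toothWedge l)) : p ∉ K := by
  intro hpK
  obtain ⟨i, q, hq, rfl⟩ := hK.exists_kochF_eq hpK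
  exact kochF_notMem_interior_toothWedge hl (hK.subset_kochTriangle hl hq) hp

theorem mem_snowflakeBoundary : p ∈ snowflakeBoundary K ↔ ∃ i, ∃ q ∈ K, kochG i q = p := by
  constructor
  · rintro ((h | h) | h)
    exacts [⟨0, h⟩, ⟨1, h⟩, ⟨2, h⟩]
  · rintro ⟨i, h⟩
    obtain rfl | rfl | rfl : i = 0 ∨ i = 1 ∨ i = 2 := by omega
    exacts [Or.inl (Or.inl h), Or.inl (Or.inr h), Or.inr h]

theorem IsKochCurve.isClosed_snowflakeBoundary (hK : IsKochCurve l K) :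
    IsClosed (snowflakeBoundary K) := by
  have hclosed : ∀ i, IsClosed (kochG i '' K) := fun i =>
    (isSimilarity_kochG i).isClosed_image hK.isCompact.isClosed
  exact ((hclosed 0).union (hclosed 1)).union (hclosed 2)

theorem IsKochCurve.snowflakeBoundary_subset_snowflakeStage (hl : l ∈ Ico (1 / 3 : ℝ) (1 / 2))
    (hK : IsKochCurve l K) (n : ℕ) : snowflakeBoundary K ⊆ snowflakeStage l n := by
  intro p hp
  obtain ⟨i, q, hq, rfl⟩ := mem_snowflakeBoundary.1 hp
  exact Or.inr (mem_iUnion.2 ⟨i, mem_image_of_mem _ (hK.subset_kochStage hl n hq)⟩)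

theorem IsKochCurve.disjoint_interior_baseTriangle (hl : l ∈ Ico (1 / 3 : ℝ) (1 / 2))
    (hK : IsKochCurve l K) : Disjoint (interior baseTriangle) (snowflakeBoundary K) := by
  refine disjoint_left.2 fun p hp hpK => ?_
  obtain ⟨i, q, hq, rfl⟩ := mem_snowflakeBoundary.1 hpK
  have hpos := triangleSide_pos_of_mem_interior hp (-i)
  rw [triangleSide_kochG, neg_add_cancel, triangleSide_zero] at hpos
  linarith [(mem_kochTriangle.1 (hK.subset_kochTriangle hl hq)).1]

end KochCurve

section KochCells

variable {l r : ℝ} {K : Set Plane} {S : Plane → Plane} {p : Plane}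

/-- The similarities `G_j ∘ F_{i₁} ∘ ⋯ ∘ F_{iₙ}`, together with their ratios `lⁿ`, that place the
copies of the von Koch curve on the boundary of the snowflake. -/
inductive IsKochCell (l : ℝ) : ℝ → (Plane → Plane) → Prop
  | base (i : Fin 3) : IsKochCell l 1 (kochG i)
  | step {r : ℝ} {S : Plane → Plane} (hS : IsKochCell l r S) (i : Fin 4) :
      IsKochCell l (l * r) (S ∘ kochF l i)

theorem IsKochCell.isSimilarity (hl : 0 < l) (hS : IsKochCell l r S) : IsSimilarity r S := by
  induction hS with
  | base i => exact isSimilarity_kochG i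
  | step _ i ih => exact ih.comp (isSimilarity_kochF hl i)

theorem IsKochCell.mapsTo_snowflakeBoundary (hK : IsKochCurve l K) (hS : IsKochCell l r S) :
    MapsTo S K (snowflakeBoundary K) := by
  induction hS with
  | base i => exact fun p hp => mem_snowflakeBoundary.2 ⟨i, p, hp, rfl⟩
  | step _ i ih => exact ih.comp (hK.mapsTo_kochF i)

theorem IsKochCell.mem_of_apply_mem (hl : l ∈ Ico (1 / 3 : ℝ) (1 / 2)) (hK : IsKochCurve l K)
    (hS : IsKochCell l r S) (hp : p ∈ kochTriangle l) (h : S p ∈ snowflakeBoundary K) : p ∈ K := by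
  induction hS generalizing p with
  | base i =>
    obtain ⟨j, q, hq, hqp⟩ := mem_snowflakeBoundary.1 h
    rcases eq_or_ne i j with rfl | hij
    · rwa [← (isSimilarity_kochG i).injective hqp]
    · exact hK.kochEndpoints_subset hl
        (mem_kochEndpoints_of_kochG_eq hl hij hp (hK.subset_kochTriangle hl hq) hqp.symm)
  | step _ i ih => exact hK.mem_of_kochF_mem hl hp (ih (mapsTo_kochF_kochTriangle hl i hp) h)

theorem IsKochCell.apply_notMem_of_mem_tooth (hl : l ∈ Ico (1 / 3 : ℝ) (1 / 2))
    (hK : IsKochCurve l K) (hS : IsKochCell l r S) (hp : p ∈ interior (toothWedge l))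
    (hp₁ : 0 ≤ p 1) : S p ∉ snowflakeBoundary K := fun h =>
  have hpT : p ∈ tooth l := mem_tooth.2 ⟨interior_subset hp, hp₁⟩
  hK.notMem_of_mem_interior_toothWedge hl hp
    (hS.mem_of_apply_mem hl hK (tooth_subset_kochTriangle hl hpT) h)

theorem IsKochCell.apply_notMem_of_mem_interior_lowerTriangle (hl : l ∈ Ico (1 / 3 : ℝ) (1 / 2))
    (hK : IsKochCurve l K) (hS : IsKochCell l r S) (hp : p ∈ interior (lowerTriangle l)) :
    S p ∉ snowflakeBoundary K := by
  induction hS generalizing p with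
  | base i =>
    have himage : kochG i '' lowerTriangle l ⊆ baseTriangle :=
      ((mapsTo_kochG_baseTriangle i).mono_left (lowerTriangle_subset_baseTriangle hl)).image_subset
    refine disjoint_left.1 (hK.disjoint_interior_baseTriangle hl) (interior_mono himage ?_)
    rw [(isSimilarity_kochG i).interior_image]
    exact mem_image_of_mem _ hp
  | step hS i ih =>
    have hpi : kochF l i p ∈ interior (kochF l i '' lowerTriangle l) := by
      rw [(isSimilarity_kochF (by linarith [hl.1]) i).interior_image]
      exact mem_image_of_mem _ hp
    rcases mapsTo_kochF_tooth_or_lowerTriangle hl i with hi | hi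
    · have hpT : kochF l i p ∈ interior (tooth l) := interior_mono hi.image_subset hpi
      exact hS.apply_notMem_of_mem_tooth (p := kochF l i p) hl hK
        (interior_mono inter_subset_left hpT) (mem_tooth.1 (interior_subset hpT)).2
    · exact ih (interior_mono hi.image_subset hpi)

theorem IsKochCell.disjoint_interior_image_lowerTriangle (hl : l ∈ Ico (1 / 3 : ℝ) (1 / 2))
    (hK : IsKochCurve l K) (hS : IsKochCell l r S) :
    Disjoint (interior (S '' lowerTriangle l)) (snowflakeBoundary K) := by
  rw [(hS.isSimilarity (by linarith [hl.1])).interior_image, disjoint_left]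
  rintro _ ⟨p, hp, rfl⟩
  exact hS.apply_notMem_of_mem_interior_lowerTriangle hl hK hp

theorem IsKochCell.disjoint_interior_image_wedges (hl : l ∈ Ico (1 / 3 : ℝ) (1 / 2))
    (hK : IsKochCurve l K) (hS : IsKochCell l r S) :
    Disjoint (interior (S '' (toothWedge l ∩ lowerWedge l))) (snowflakeBoundary K) := by
  rw [(hS.isSimilarity (by linarith [hl.1])).interior_image, interior_inter, disjoint_left]
  rintro _ ⟨p, ⟨hpT, hpW⟩, rfl⟩
  rcases le_or_gt 0 (p 1) with hp | hp
  · exact hS.apply_notMem_of_mem_tooth hl hK hpT hp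
  · refine hS.apply_notMem_of_mem_interior_lowerTriangle hl hK ?_
    rw [lowerTriangle, interior_inter]
    refine ⟨hpW, mem_interior.2 ⟨{q | q 1 < 0}, fun q (hq : q 1 < 0) => ?_, ?_, hp⟩⟩
    · rw [mem_halfPlane]
      linarith
    · exact isOpen_lt (by fun_prop) continuous_const

end KochCells

/-! ### John arcs to the centre of the snowflake -/

section SnowflakeArcs

variable {l r : ℝ} {K : Set Plane} {S : Plane → Plane} {x p : Plane}

theorem three_mul_le_sqrt_three_mul_kochHeight (hl : l ∈ Ico (1 / 3 : ℝ) (1 / 2)) :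
    3 * (1 / 2 - l) ≤ √3 * kochHeight l := by
  have := mul_le_mul_of_nonneg_left (sqrt_three_mul_le_kochHeight hl) (Real.sqrt_nonneg 3)
  rwa [← mul_assoc, Real.mul_self_sqrt zero_le_three] at this

theorem johnConst_mul_le (hl : l ∈ Ico (1 / 3 : ℝ) (1 / 2)) :
    johnConst l * (√3 / 6 + kochHeight l) ≤ √3 / 6 := by
  have hl₀ : 0 < l := by linarith [hl.1]
  rw [johnConst, div_mul_eq_mul_div, div_le_iff₀ hl₀]
  have hle : 3 * (1 / 2 - l) * kochHeight l ≤ √3 * (l - 1 / 4) := by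
    rw [← kochHeight_sq hl, sq, ← mul_assoc]
    exact mul_le_mul_of_nonneg_right (three_mul_le_sqrt_three_mul_kochHeight hl)
      (kochHeight_pos hl).le
  linarith

theorem dist_station_snowflakeCenter (hl : l ∈ Ico (1 / 3 : ℝ) (1 / 2)) :
    dist (station l) snowflakeCenter ≤ √3 / 6 + kochHeight l - stationTime l := by
  refine dist_plane_le ?_ (le_of_eq ?_)
  · refine nonneg_of_mul_nonneg_right (a := 2 * kochHeight l) ?_
      (mul_pos two_pos (kochHeight_pos hl))
    linarith [three_mul_le_sqrt_three_mul_kochHeight hl, kochHeight_sq hl,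
      two_mul_kochHeight_mul_stationTime hl]
  · simp only [station, snowflakeCenter, pt_apply_zero, pt_apply_one]
    ring

theorem exists_hasJohnArc_of_kochG_station (hl : l ∈ Ico (1 / 3 : ℝ) (1 / 2))
    (hK : IsKochCurve l K) (i : Fin 3)
    (h : HasJohnArc (snowflakeBoundary K) (johnConst l) x (stationTime l) (kochG i (station l))) :
    ∃ t, HasJohnArc (snowflakeBoundary K) (johnConst l) x t snowflakeCenter := by
  have hG := isSimilarity_kochG i
  refine ⟨√3 / 6 + kochHeight l, h.extend (johnConst_pos hl).le convex_baseTriangle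
    (hK.disjoint_interior_baseTriangle hl) ?_ ?_ ?_⟩
  · rw [← one_mul (johnConst l * stationTime l)]
    exact (hG.closedBall_subset_image (closedBall_station_subset_lowerTriangle hl)).trans
      ((mapsTo_kochG_baseTriangle i).mono_left (lowerTriangle_subset_baseTriangle hl)).image_subset
  · exact (closedBall_subset_closedBall (johnConst_mul_le hl)).trans
      closedBall_snowflakeCenter_subset
  · rw [← kochG_snowflakeCenter i, hG.dist_map, one_mul]
    exact dist_station_snowflakeCenter hl

/-- From the station of a cell the arc moves to the station of the parent cell. -/
theorem IsKochCell.hasJohnArc_station (hl : l ∈ Ico (1 / 3 : ℝ) (1 / 2)) (hK : IsKochCurve l K)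
    (hS : IsKochCell l r S) (i : Fin 4)
    (h : HasJohnArc (snowflakeBoundary K) (johnConst l) x (l * r * stationTime l)
      ((S ∘ kochF l i) (station l))) :
    HasJohnArc (snowflakeBoundary K) (johnConst l) x (r * stationTime l) (S (station l)) := by
  have hl₀ : 0 < l := by linarith [hl.1]
  have hsim := hS.isSimilarity hl₀
  have hF := isSimilarity_kochF hl₀ i
  obtain ⟨C, hC, hCK, hstation, hFC⟩ : ∃ C : Set Plane, Convex ℝ C ∧
      Disjoint (interior (S '' C)) (snowflakeBoundary K) ∧
      closedBall (station l) (johnConst l * stationTime l) ⊆ C ∧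
      MapsTo (kochF l i) (lowerTriangle l) C := by
    have hball := closedBall_station_subset_lowerTriangle hl
    rcases mapsTo_kochF_tooth_or_lowerTriangle hl i with hi | hi
    · exact ⟨_, convex_toothWedge.inter convex_lowerWedge, hS.disjoint_interior_image_wedges hl hK,
        subset_inter (closedBall_station_subset_toothWedge hl) (hball.trans inter_subset_left),
        hi.mono_right (subset_inter inter_subset_left (tooth_subset_lowerWedge hl))⟩
    · exact ⟨_, convex_lowerTriangle, hS.disjoint_interior_image_lowerTriangle hl hK, hball, hi⟩
  refine h.extend (johnConst_pos hl).le (hsim.convex_image hC) hCK ?_ ?_ ?_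
  · rw [mul_left_comm]
    refine ((hsim.comp hF).closedBall_subset_image
      (closedBall_station_subset_lowerTriangle hl)).trans ?_
    rw [image_comp]
    exact image_mono hFC.image_subset
  · rw [mul_left_comm]
    exact hsim.closedBall_subset_image hstation
  · calc dist ((S ∘ kochF l i) (station l)) (S (station l))
        = r * dist (kochF l i (station l)) (station l) := hsim.dist_map _ _
      _ ≤ r * (stationTime l - l * stationTime l) :=
        mul_le_mul_of_nonneg_left (dist_kochF_station_le hl i) hsim.1.le
      _ = r * stationTime l - l * r * stationTime l := by ring

theorem IsKochCell.exists_hasJohnArc_of_station (hl : l ∈ Ico (1 / 3 : ℝ) (1 / 2))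
    (hK : IsKochCurve l K) (hS : IsKochCell l r S)
    (h : HasJohnArc (snowflakeBoundary K) (johnConst l) x (r * stationTime l) (S (station l))) :
    ∃ t, HasJohnArc (snowflakeBoundary K) (johnConst l) x t snowflakeCenter := by
  induction hS with
  | base i => exact exists_hasJohnArc_of_kochG_station hl hK i (by rwa [one_mul] at h)
  | step hS i ih => exact ih (hS.hasJohnArc_station hl hK i h)

theorem IsKochCell.exists_hasJohnArc_of_mem_tooth (hl : l ∈ Ico (1 / 3 : ℝ) (1 / 2))
    (hK : IsKochCurve l K) (hS : IsKochCell l r S) (hp : p ∈ tooth l) :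
    ∃ t, HasJohnArc (snowflakeBoundary K) (johnConst l) (S p) t snowflakeCenter := by
  have hl₀ : 0 < l := by linarith [hl.1]
  have hsim := hS.isSimilarity hl₀
  have hchild := hS.step 1
  refine hchild.exists_hasJohnArc_of_station hl hK ?_
  have hteeth : tooth l ⊆ toothWedge l ∩ lowerWedge l :=
    subset_inter inter_subset_left (tooth_subset_lowerWedge hl)
  refine (HasJohnArc.refl _ _ (S p)).extend (johnConst_pos hl).le
    (hsim.convex_image convex_tooth) ((hS.disjoint_interior_image_wedges hl hK).mono_left
      (interior_mono (image_mono hteeth))) ?_ ?_ ?_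
  · rw [mul_zero, closedBall_zero, singleton_subset_iff]
    exact mem_image_of_mem S hp
  · rw [mul_left_comm]
    refine ((hchild.isSimilarity hl₀).closedBall_subset_image
      (closedBall_station_subset_lowerTriangle hl)).trans ?_
    rw [image_comp]
    exact image_mono (mapsTo_kochF_one_lowerTriangle hl).image_subset
  · calc dist (S p) (S (kochF l 1 (station l)))
        = r * dist p (kochF l 1 (station l)) := hsim.dist_map _ _
      _ ≤ r * (l * stationTime l) :=
        mul_le_mul_of_nonneg_left (dist_kochF_one_station_le hl hp) hsim.1.le
      _ = l * r * stationTime l - 0 := by ring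

theorem exists_hasJohnArc_of_mem_baseTriangle (hl : l ∈ Ico (1 / 3 : ℝ) (1 / 2))
    (hK : IsKochCurve l K) (hx : x ∈ baseTriangle) :
    ∃ t, HasJohnArc (snowflakeBoundary K) (johnConst l) x t snowflakeCenter := by
  refine ⟨√3 / 3, (HasJohnArc.refl _ _ x).extend (johnConst_pos hl).le convex_baseTriangle
    (hK.disjoint_interior_baseTriangle hl) ?_ ?_ ?_⟩
  · rwa [mul_zero, closedBall_zero, singleton_subset_iff]
  · refine (closedBall_subset_closedBall ?_).trans closedBall_snowflakeCenter_subset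
    linarith [mul_le_mul_of_nonneg_right (johnConst_le_half hl)
      (by positivity : 0 ≤ √3 / 3)]
  · exact (dist_snowflakeCenter_le hx).trans_eq (sub_zero _).symm

theorem dist_pt_zero_zero_le (hl : l ∈ Ico (1 / 3 : ℝ) (1 / 2)) (hp : p ∈ kochTriangle l) :
    dist p (pt 0 0) ≤ 2 := by
  obtain ⟨hx₀, hx₁⟩ := mem_Icc_of_mem_kochTriangle hl hp
  obtain ⟨hy, hleft, -⟩ := mem_kochTriangle.1 hp
  have hh := kochHeight_pos hl
  have : p 1 ≤ 1 := by nlinarith [kochHeight_sq hl, hl.2]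
  refine dist_plane_le zero_le_two ?_
  rw [pt_apply_zero, pt_apply_one]
  nlinarith

theorem IsKochCell.exists_hasJohnArc_or_infDist_le (hl : l ∈ Ico (1 / 3 : ℝ) (1 / 2))
    (hK : IsKochCurve l K) (hS : IsKochCell l r S) {n : ℕ} (hp : p ∈ kochStage l n) :
    (∃ t, HasJohnArc (snowflakeBoundary K) (johnConst l) (S p) t snowflakeCenter) ∨
      infDist (S p) (snowflakeBoundary K) ≤ l ^ n * r * 2 := by
  have hl₀ : 0 < l := by linarith [hl.1]
  induction n generalizing r S p with
  | zero =>
    have hsim := hS.isSimilarity hl₀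
    have h₀ : S (pt 0 0) ∈ snowflakeBoundary K :=
      hS.mapsTo_snowflakeBoundary hK (hK.kochEndpoints_subset hl (Or.inl rfl))
    refine Or.inr ((infDist_le_dist_of_mem h₀).trans ?_)
    rw [hsim.dist_map, pow_zero, one_mul]
    exact mul_le_mul_of_nonneg_left (dist_pt_zero_zero_le hl hp) hsim.1.le
  | succ n ih =>
    rcases hp with hp | hp
    · exact Or.inl (hS.exists_hasJohnArc_of_mem_tooth hl hK hp)
    · obtain ⟨i, q, hq, rfl⟩ := mem_iUnion.1 hp
      rw [pow_succ, mul_assoc (l ^ n)]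
      exact ih (S := S ∘ kochF l i) (hS.step i) hq

theorem IsKochCurve.exists_hasJohnArc (hl : l ∈ Ico (1 / 3 : ℝ) (1 / 2)) (hK : IsKochCurve l K)
    (hx : ∀ n, x ∈ snowflakeStage l n) (hxK : x ∉ snowflakeBoundary K) :
    ∃ t, HasJohnArc (snowflakeBoundary K) (johnConst l) x t snowflakeCenter := by
  have hne : (snowflakeBoundary K).Nonempty :=
    hK.nonempty.image (kochG 0) |>.mono fun _ h => Or.inl (Or.inl h)
  have hpos := (hK.isClosed_snowflakeBoundary.notMem_iff_infDist_pos hne).1 hxK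
  obtain ⟨n, hn⟩ := exists_pow_lt_of_lt_one (half_pos hpos) (by linarith [hl.2] : l < 1)
  rcases hx n with hx | hx
  · exact exists_hasJohnArc_of_mem_baseTriangle hl hK hx
  · obtain ⟨i, p, hp, rfl⟩ := mem_iUnion.1 hx
    refine ((IsKochCell.base i).exists_hasJohnArc_or_infDist_le hl hK hp).resolve_right ?_
    linarith

theorem IsKochCurve.connectedComponentIn_subset_snowflakeStage (hl : l ∈ Ico (1 / 3 : ℝ) (1 / 2))
    (hK : IsKochCurve l K)
    (hb : Bornology.IsBounded (connectedComponentIn (snowflakeBoundary K)ᶜ x)) (n : ℕ) :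
    connectedComponentIn (snowflakeBoundary K)ᶜ x ⊆ snowflakeStage l n :=
  have hclosed := hK.isClosed_snowflakeBoundary
  isFull_snowflakeStage hl n _ hclosed.isOpen_compl.connectedComponentIn hb
    ((frontier_connectedComponentIn_compl_subset hclosed x).trans
      (hK.snowflakeBoundary_subset_snowflakeStage hl n))

end SnowflakeArcs

/-- **The snowflake domain is John.** The bounded connected component `Ω` of the
complement of the snowflake boundary built from the von Koch curve with parameter
`l ∈ [1/3,1/2)` is a `((1/2-l)/l)`-John domain. -/
theorem snowflake_isJohnDomain (l : ℝ) (hl1 : 1/3 ≤ l) (hl2 : l < 1/2)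
    (K : Set Plane) (hne : K.Nonempty) (hcomp : IsCompact K)
    (hK : K = kochF l 0 '' K ∪ kochF l 1 '' K ∪ kochF l 2 '' K ∪ kochF l 3 '' K)
    (Ω : Set Plane) (hbdd : Bornology.IsBounded Ω)
    (hΩ : ∃ x ∈ (snowflakeBoundary K)ᶜ, Ω = connectedComponentIn (snowflakeBoundary K)ᶜ x) :
    IsJohnDomain Ω ((1/2 - l) / l) := by
  have hl : l ∈ Ico (1 / 3 : ℝ) (1 / 2) := ⟨hl1, hl2⟩
  have hKoch : IsKochCurve l K := ⟨hcomp, hne, hK.trans (iUnion_kochF_image l K).symm⟩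
  obtain ⟨x₁, hx₁, rfl⟩ := hΩ
  exact isJohnDomain_of_hasJohnArc hKoch.isClosed_snowflakeBoundary (johnConst_pos hl) hx₁ hbdd
    fun x hx => hKoch.exists_hasJohnArc hl
      (fun n => hKoch.connectedComponentIn_subset_snowflakeStage hl hbdd n hx)
      (connectedComponentIn_subset _ _ hx)
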